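/- Let r ≥ 3 and let ℓ₁ ≥ ℓ₂ ≥ r + 6 be odd integers. For sufficiently large n, ex_r(n, Berge-(P_{ℓ₁} ∪ P_{ℓ₂})) = max{ ex_r(n, Berge-P_{ℓ₁}), C((ℓ₁+ℓ₂)/2, r-1)·(n - (ℓ₁+ℓ₂)/2) + C((ℓ₁+ℓ₂)/2, r) }. -/

import Mathlib

/-!
Put `k = (ℓ₁ + ℓ₂) / 2` and `c = C(k, r - 1)`.

*Lower bound.* Besides `ex_r(n, Berge-P_ℓ₁)`, consider the hypergraph of all `r`-sets with at most
one vertex outside a fixed `k`-set `K`. The two odd paths contain a perfect matching with `k + 1`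
edges, and each of its edges needs an endpoint of its own in `K`, so no Berge copy of the union
exists (`union_free_of_one_outside`, `exists_extremal`).

*Upper bound.* Suppose `H` has no copy of the union, contains a Berge path with `ℓ₁` edges and has
more than `c (n - k) + C(k, r)` edges. Restricting to a vertex set `W` that maximises a suitable
linear combination of `e(W)` and `|W|`, one may assume that every `S` with `|S| ≤ k` meets at least
`c |S|` edges, while `H` still has too many edges and `|W|` is still large
(`exists_dense_subset`). For a bounded set `A` of vertices, look at the components of the incidence
graph after the vertices in `A` have been deleted.

* *Local structure* (`local_struct`). Let `N ⊆ A` be the set of vertices through which a component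
  can be entered in pairwise different ways. Taking a longest path from `x ∈ N` into the component,
  rotating its end (`rotate`) and counting the edges at the possible ends (`end_count`,
  `num_core`) shows that either there is a path into the component with at least `k + 2 - |N|`
  edges, or `|N| = k` and some vertex `y` of the component is *full*: its edges are exactly the
  `r`-sets through `y` inside `N ∪ {y}`.
* A component not attached to `A` contains a path with `k ≥ ℓ₂` edges
  (`long_path_of_unattached`). So, if `A` contains the vertices of a Berge `P_ℓ₁`, every component
  is attached to `A`.
* A Berge path with `2k + 1` edges contains both paths. Hence deleting a bounded number of further
  vertices produces many components, for otherwise iterated deletion builds such a path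
  (`many_classes`).
* By pigeonhole many components have the same set `N`. If one of them had a long path starting in
  `N`, then joining all of `N` through different components would give a path with `2k + 1` edges
  (`assembly`). Therefore there are a set `K` of size `k` and `k + 1` full vertices over `K`
  (`exists_full_set`).
* The same joining argument with `A = K` shows that no edge has two vertices outside `K`
  (`one_outside`), so `H` has at most `c (|W| - k) + C(k, r)` edges, a contradiction.
-/
open Finset

/-- A Berge copy of the graph `F` in the hypergraph `H`: an injective embedding of the
vertices of `F` together with an injective assignment of distinct hyperedges to the
edges of `F`, each hyperedge containing (the images of) both endpoints of its edge. -/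
def IsBergeCopy {α V : Type*} (F : SimpleGraph α) (H : Finset (Finset V)) : Prop :=
  ∃ (f : α → V) (φ : Sym2 α → Finset V),
    Function.Injective f ∧ Set.InjOn φ F.edgeSet ∧
    ∀ e ∈ F.edgeSet, φ e ∈ H ∧ ∀ x ∈ e, f x ∈ φ e

/-- The Turán number `ex_r(n, Berge-F)`: the maximum number of hyperedges in an
`n`-vertex `r`-uniform hypergraph with no Berge copy of `F`. -/
noncomputable def exBerge {α : Type*} (r n : ℕ) (F : SimpleGraph α) : ℕ :=
  sSup {m | ∃ H : Finset (Finset (Fin n)),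
    (∀ e ∈ H, e.card = r) ∧ ¬ IsBergeCopy F H ∧ H.card = m}

/-- The path with `ℓ` edges, on `ℓ+1` vertices. -/
def pathG (ℓ : ℕ) : SimpleGraph (Fin (ℓ + 1)) :=
  SimpleGraph.fromRel (fun x y => (x : ℕ) + 1 = (y : ℕ))

/-- `c` vertex-disjoint stars, each with `ℓ` edges (centers are the vertices `(i, 0)`). -/
def starsG (c ℓ : ℕ) : SimpleGraph (Fin c × Fin (ℓ + 1)) :=
  SimpleGraph.fromRel (fun x y => x.1 = y.1 ∧ x.2 = 0)

/-- A matching with `t` edges. -/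
def matchingG (t : ℕ) : SimpleGraph (Fin t × Fin 2) :=
  SimpleGraph.fromRel (fun x y => x.1 = y.1)

/-- Vertex-disjoint union of `k` paths, the `i`-th having `ℓ i` edges. -/
def pathsG (k : ℕ) (ℓ : Fin k → ℕ) : SimpleGraph (Σ i : Fin k, Fin (ℓ i + 1)) :=
  SimpleGraph.fromRel (fun x y => x.1 = y.1 ∧ (x.2 : ℕ) + 1 = (y.2 : ℕ))

/-- A hypergraph is connected if every two vertices are joined by a walk of hyperedges
(equivalently, lie on a common Berge path). -/
def HyperConnected {V : Type*} (H : Finset (Finset V)) : Prop :=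
  ∀ u v : V, Relation.ReflTransGen (fun a b => ∃ e ∈ H, a ∈ e ∧ b ∈ e) u v

/-- The connected Turán number `ex^con_r(n, Berge-F)`. -/
noncomputable def exConBerge {α : Type*} (r n : ℕ) (F : SimpleGraph α) : ℕ :=
  sSup {m | ∃ H : Finset (Finset (Fin n)),
    (∀ e ∈ H, e.card = r) ∧ HyperConnected H ∧ ¬ IsBergeCopy F H ∧ H.card = m}

/-! ### Paths and components of the incidence graph -/

section

variable {V : Type*}

/-- The incidence graph of the hypergraph `H` after deleting the vertices in `A`. Hyperedges stay
nodes even if they meet `A`; only the incidences with vertices of `A` are removed. -/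
def incG (H : Finset (Finset V)) (A : Finset V) : SimpleGraph (V ⊕ Finset V) where
  Adj
    | Sum.inl v, Sum.inr e => e ∈ H ∧ v ∈ e ∧ v ∉ A
    | Sum.inr e, Sum.inl v => e ∈ H ∧ v ∈ e ∧ v ∉ A
    | _, _ => False
  symm.symm
    | Sum.inl _, Sum.inr _, h => h
    | Sum.inr _, Sum.inl _, h => h
  loopless.irrefl
    | Sum.inl _ => id
    | Sum.inr _ => id

@[simp] lemma incG_lr (H : Finset (Finset V)) (A : Finset V) (v : V) (e : Finset V) :
    (incG H A).Adj (Sum.inl v) (Sum.inr e) ↔ e ∈ H ∧ v ∈ e ∧ v ∉ A := Iff.rfl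

@[simp] lemma incG_rl (H : Finset (Finset V)) (A : Finset V) (v : V) (e : Finset V) :
    (incG H A).Adj (Sum.inr e) (Sum.inl v) ↔ e ∈ H ∧ v ∈ e ∧ v ∉ A := Iff.rfl

@[simp] lemma incG_ll (H : Finset (Finset V)) (A : Finset V) (v w : V) :
    ¬ (incG H A).Adj (Sum.inl v) (Sum.inl w) := id

@[simp] lemma incG_rr (H : Finset (Finset V)) (A : Finset V) (v w : Finset V) :
    ¬ (incG H A).Adj (Sum.inr v) (Sum.inr w) := id

lemma incG_mono {H : Finset (Finset V)} {A B : Finset V} (h : A ⊆ B) : incG H B ≤ incG H A := by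
  rintro (a | a) (b | b) hab
  · exact hab
  · exact ⟨hab.1, hab.2.1, fun h' => hab.2.2 (h h')⟩
  · exact ⟨hab.1, hab.2.1, fun h' => hab.2.2 (h h')⟩
  · exact hab

/-- The component of the vertex `v` in `incG H A`, as a set of vertices and hyperedges. -/
def comp (H : Finset (Finset V)) (A : Finset V) (v : V) : Set (V ⊕ Finset V) :=
  {z | (incG H A).Reachable (Sum.inl v) z}

/-- A Berge path, encoded as the alternating list of its vertices and hyperedges. It is a list of
distinct nodes of the full incidence graph and may start or end with a hyperedge. -/
def BPath (H : Finset (Finset V)) (l : List (V ⊕ Finset V)) : Prop :=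
  l.IsChain (incG H ∅).Adj ∧ l.Nodup

variable {H : Finset (Finset V)} {A : Finset V}

lemma comp_self (v : V) : Sum.inl v ∈ comp H A v := SimpleGraph.Reachable.refl _

lemma comp_step {v : V} {a b : V ⊕ Finset V} (ha : a ∈ comp H A v) (hab : (incG H A).Adj a b) :
    b ∈ comp H A v := SimpleGraph.Reachable.trans ha hab.reachable

/-- A property of nodes that holds at `v` and is preserved along adjacency holds on the component. -/
lemma comp_induct {v : V} {P : V ⊕ Finset V → Prop} (h0 : P (Sum.inl v))
    (hs : ∀ a b, P a → (incG H A).Adj a b → P b) : ∀ z ∈ comp H A v, P z := by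
  rintro z ⟨p⟩
  generalize Sum.inl v = s at p h0
  induction p with
  | nil => exact h0
  | cons h p ih => exact ih (hs _ _ h0 h)

lemma comp_notMem {v u : V} (hv : v ∉ A) (hu : Sum.inl u ∈ comp H A v) : u ∉ A := by
  have := comp_induct (H := H) (A := A) (v := v)
    (P := fun z => ∀ u, z = Sum.inl u → u ∉ A) (by rintro u h; cases h; exact hv) (by
      rintro (a | a) (b | b) hP hab u h
      · exact absurd hab (incG_ll _ _ _ _)
      · cases h
      · cases h; exact hab.2.2
      · cases h) _ hu
  exact this u rfl

lemma comp_edge {v : V} {e : Finset V} (he : Sum.inr e ∈ comp H A v) :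
    e ∈ H ∧ ∃ u ∈ e, u ∉ A ∧ Sum.inl u ∈ comp H A v := by
  have := comp_induct (H := H) (A := A) (v := v)
    (P := fun z => z ∈ comp H A v ∧ ∀ e, z = Sum.inr e → e ∈ H ∧ ∃ u ∈ e, u ∉ A ∧ Sum.inl u ∈ comp H A v)
    ⟨comp_self v, by rintro u h; cases h⟩ (by
      rintro (a | a) (b | b) hP hab
      · exact absurd hab (incG_ll _ _ _ _)
      · refine ⟨comp_step hP.1 hab, ?_⟩
        rintro e h; cases h; exact ⟨hab.1, a, hab.2.1, hab.2.2, hP.1⟩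
      · refine ⟨comp_step hP.1 hab, ?_⟩
        rintro e h; cases h
      · exact absurd hab (incG_rr _ _ _ _)) _ he
  exact this.2 e rfl

lemma comp_edge_of {v u : V} {e : Finset V} (hu : Sum.inl u ∈ comp H A v) (huA : u ∉ A)
    (he : e ∈ H) (hue : u ∈ e) : Sum.inr e ∈ comp H A v := comp_step hu ⟨he, hue, huA⟩

lemma comp_vert_of {v u : V} {e : Finset V} (he : Sum.inr e ∈ comp H A v) (huA : u ∉ A)
    (hue : u ∈ e) : Sum.inl u ∈ comp H A v := comp_step he ⟨(comp_edge he).1, hue, huA⟩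

lemma comp_mono {A B : Finset V} (h : A ⊆ B) {v w : V} (hw : Sum.inl w ∈ comp H A v) :
    comp H B w ⊆ comp H A v := fun _ hz =>
  SimpleGraph.Reachable.trans hw (SimpleGraph.Reachable.mono (incG_mono h) hz)

lemma comp_disj {v w : V} (h : Sum.inl w ∉ comp H A v) {z : V ⊕ Finset V}
    (hv : z ∈ comp H A v) (hw : z ∈ comp H A w) : False :=
  h (SimpleGraph.Reachable.trans hv (SimpleGraph.Reachable.symm hw))

/-- Two distinct edges of one component are joined inside the component. -/
lemma comp_conn {v : V} {e e' : Finset V} (he : Sum.inr e ∈ comp H A v)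
    (he' : Sum.inr e' ∈ comp H A v) (hne : e ≠ e') :
    ∃ l : List (V ⊕ Finset V), BPath H l ∧ (∀ z ∈ l, z ∈ comp H A v) ∧ 3 ≤ l.length ∧
      l.head? = some (Sum.inr e) ∧ l.getLast? = some (Sum.inr e') := by
  classical
  obtain ⟨p, hp⟩ := SimpleGraph.Reachable.exists_isPath
    (SimpleGraph.Reachable.trans (SimpleGraph.Reachable.symm he) he')
  have hh : p.support.head? = some (Sum.inr e) := by
    cases p <;> simp
  have hl : p.support.getLast? = some (Sum.inr e') := by
    rw [List.getLast?_eq_some_getLast (by simp)]; simp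
  refine ⟨p.support, ⟨p.isChain_adj_support.imp (fun a b h => incG_mono (empty_subset A) h),
    hp.support_nodup⟩, ?_, ?_, hh, hl⟩
  · intro z hz
    exact SimpleGraph.Reachable.trans he ⟨p.takeUntil z hz⟩
  · cases p with
    | nil => exact absurd rfl hne
    | cons h q =>
      cases q with
      | nil => exact absurd h (incG_rr _ _ _ _)
      | cons h q => simp 

lemma BPath.reverse {l : List (V ⊕ Finset V)} (h : BPath H l) : BPath H l.reverse := by
  refine ⟨?_, List.nodup_reverse.2 h.2⟩
  rw [List.isChain_reverse]
  exact h.1.imp (fun a b hab => hab.symm)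

lemma BPath.append {l₁ l₂ : List (V ⊕ Finset V)} (h₁ : BPath H l₁) (h₂ : BPath H l₂)
    (hd : ∀ z ∈ l₁, z ∉ l₂) (hj : ∀ x ∈ l₁.getLast?, ∀ y ∈ l₂.head?, (incG H ∅).Adj x y) :
    BPath H (l₁ ++ l₂) :=
  ⟨List.isChain_append.2 ⟨h₁.1, h₂.1, hj⟩,
    List.nodup_append.2 ⟨h₁.2, h₂.2, fun a ha _ hb hab => hd a ha (hab ▸ hb)⟩⟩

lemma BPath.sublist_take {l : List (V ⊕ Finset V)} (h : BPath H l) (n : ℕ) : BPath H (l.take n) :=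
  ⟨h.1.take n, h.2.sublist (List.take_sublist _ _)⟩

lemma BPath.sublist_drop {l : List (V ⊕ Finset V)} (h : BPath H l) (n : ℕ) : BPath H (l.drop n) :=
  ⟨h.1.drop n, h.2.sublist (List.drop_sublist _ _)⟩

lemma BPath.left {l₁ l₂ : List (V ⊕ Finset V)} (h : BPath H (l₁ ++ l₂)) : BPath H l₁ :=
  ⟨(List.isChain_append.1 h.1).1, (List.nodup_append.1 h.2).1⟩

lemma BPath.right {l₁ l₂ : List (V ⊕ Finset V)} (h : BPath H (l₁ ++ l₂)) : BPath H l₂ :=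
  ⟨(List.isChain_append.1 h.1).2.1, (List.nodup_append.1 h.2).2.1⟩

/-- A path in the incidence graph that starts at a vertex alternates vertices and hyperedges. -/
lemma BPath.parity {l : List (V ⊕ Finset V)} (h : BPath H l) (h0 : ∃ x, l[0]? = some (Sum.inl x)) :
    ∀ i, (2 * i < l.length → ∃ x, l[2 * i]? = some (Sum.inl x)) ∧
      (2 * i + 1 < l.length → ∃ e, l[2 * i + 1]? = some (Sum.inr e)) := by
  have hc := List.isChain_iff_getElem.1 h.1
  have key : ∀ j, (hj : j + 1 < l.length) → (∃ x, l[j]? = some (Sum.inl x)) →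
      ∃ e, l[j + 1]? = some (Sum.inr e) := by
    rintro j hj ⟨x, hx⟩
    have := hc j hj
    rw [List.getElem?_eq_getElem (by omega)] at hx ⊢
    rw [Option.some.inj hx] at this
    rcases hh : l[j+1] with b | b
    · rw [hh] at this; exact absurd this (incG_ll _ _ _ _)
    · exact ⟨b, rfl⟩
  have key' : ∀ j, (hj : j + 1 < l.length) → (∃ x, l[j]? = some (Sum.inr x)) →
      ∃ e, l[j + 1]? = some (Sum.inl e) := by
    rintro j hj ⟨x, hx⟩
    have := hc j hj
    rw [List.getElem?_eq_getElem (by omega)] at hx ⊢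
    rw [Option.some.inj hx] at this
    rcases hh : l[j+1] with b | b
    · exact ⟨b, rfl⟩
    · rw [hh] at this; exact absurd this (incG_rr _ _ _ _)
  intro i
  induction i with
  | zero => exact ⟨fun _ => h0, fun hi => key 0 hi h0⟩
  | succ i ih =>
    have h1 : 2 * (i + 1) < l.length → ∃ x, l[2 * (i + 1)]? = some (Sum.inl x) :=
      fun hi => key' (2 * i + 1) (by omega) (ih.2 (by omega))
    exact ⟨h1, fun hi => key _ hi (h1 (by omega))⟩

/-- Vertex and hyperedge sequences of the first `n` steps of a path. -/
lemma BPath.seqs {l : List (V ⊕ Finset V)} (h : BPath H l) (h0 : ∃ x, l[0]? = some (Sum.inl x))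
    (n : ℕ) (hn : 2 * n + 1 ≤ l.length) :
    ∃ (u : ℕ → V) (g : ℕ → Finset V),
      (∀ i ≤ n, l[2 * i]? = some (Sum.inl (u i))) ∧
      (∀ i < n, l[2 * i + 1]? = some (Sum.inr (g i))) ∧
      (∀ i ≤ n, ∀ j ≤ n, u i = u j → i = j) ∧ (∀ i < n, ∀ j < n, g i = g j → i = j) ∧
      (∀ i < n, g i ∈ H ∧ u i ∈ g i ∧ u (i + 1) ∈ g i) := by
  have hp := h.parity h0
  obtain ⟨x0, hx0⟩ := h0
  have h1 : ∀ i, ∃ x, i ≤ n → l[2 * i]? = some (Sum.inl x) := fun i => by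
    by_cases hi : i ≤ n
    · obtain ⟨x, hx⟩ := (hp i).1 (by omega); exact ⟨x, fun _ => hx⟩
    · exact ⟨x0, fun h => absurd h hi⟩
  have h2 : ∀ i, ∃ x, i < n → l[2 * i + 1]? = some (Sum.inr x) := fun i => by
    by_cases hi : i < n
    · obtain ⟨x, hx⟩ := (hp i).2 (by omega); exact ⟨x, fun _ => hx⟩
    · exact ⟨∅, fun h => absurd h hi⟩
  choose u hu using h1
  choose g hg using h2
  have hinj : ∀ i j, i < l.length → l[i]? = l[j]? → i = j := fun i j hi hij =>
    (List.getElem?_inj hi h.2).1 hij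
  have hc := List.isChain_iff_getElem.1 h.1
  refine ⟨u, g, hu, hg, ?_, ?_, ?_⟩
  · intro i hi j hj hij
    have := hinj (2 * i) (2 * j) (by omega) (by rw [hu i hi, hu j hj, hij])
    omega
  · intro i hi j hj hij
    have := hinj (2 * i + 1) (2 * j + 1) (by omega) (by rw [hg i hi, hg j hj, hij])
    omega
  · intro i hi
    have a1 := hu i hi.le
    have a2 := hg i hi
    have a3 := hu (i + 1) hi
    rw [show 2 * (i + 1) = 2 * i + 1 + 1 by ring] at a3
    rw [List.getElem?_eq_getElem (by omega), Option.some_inj] at a1 a2 a3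
    have b1 := hc (2 * i) (by omega)
    have b2 := hc (2 * i + 1) (by omega)
    rw [a1, a2] at b1
    rw [a2, a3] at b2
    exact ⟨b1.1, b1.2.1, b2.2.1⟩

/-- The nodes of a path are exactly the members of its vertex and hyperedge sequences. -/
lemma seqs_mem {l : List (V ⊕ Finset V)} {n : ℕ} (hn : l.length = 2 * n + 1)
    {u : ℕ → V} {g : ℕ → Finset V} (hu : ∀ i ≤ n, l[2 * i]? = some (Sum.inl (u i)))
    (hg : ∀ i < n, l[2 * i + 1]? = some (Sum.inr (g i))) (z : V ⊕ Finset V) :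
    z ∈ l ↔ (∃ i ≤ n, z = Sum.inl (u i)) ∨ (∃ i < n, z = Sum.inr (g i)) := by
  rw [List.mem_iff_getElem?]
  constructor
  · rintro ⟨j, hj⟩
    have hjl : j < l.length := by
      by_contra hcon
      rw [List.getElem?_eq_none (by omega)] at hj; cases hj
    rcases Nat.even_or_odd' j with ⟨i, rfl | rfl⟩
    · left; refine ⟨i, by omega, ?_⟩
      rw [hu i (by omega)] at hj; exact (Option.some.inj hj).symm
    · right; refine ⟨i, by omega, ?_⟩
      rw [hg i (by omega)] at hj; exact (Option.some.inj hj).symm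
  · rintro (⟨i, hi, rfl⟩ | ⟨i, hi, rfl⟩)
    · exact ⟨_, hu i hi⟩
    · exact ⟨_, hg i hi⟩

end

/-! ### Paths of the incidence graph and Berge copies -/

section

variable {V : Type*} {H : Finset (Finset V)} {A : Finset V}

/-- A Berge path with `n` hyperedges given by its vertices `u 0, …, u n` and hyperedges
`g 0, …, g (n - 1)`; other values of `u` and `g` are irrelevant. -/
def BSeq (H : Finset (Finset V)) (n : ℕ) (u : ℕ → V) (g : ℕ → Finset V) : Prop :=
  (∀ i ≤ n, ∀ j ≤ n, u i = u j → i = j) ∧ (∀ i < n, ∀ j < n, g i = g j → i = j) ∧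
    ∀ i < n, g i ∈ H ∧ u i ∈ g i ∧ u (i + 1) ∈ g i

lemma pathG_adj {n : ℕ} {x y : Fin (n + 1)} :
    (pathG n).Adj x y ↔ (x : ℕ) + 1 = y ∨ (y : ℕ) + 1 = x := by
  unfold pathG
  rw [SimpleGraph.fromRel_adj]
  constructor
  · exact fun h => h.2
  · exact fun h => ⟨by rintro rfl; omega, h⟩

lemma copy_bseq {n : ℕ} (h : IsBergeCopy (pathG n) H) : ∃ u g, BSeq H n u g := by
  obtain ⟨f, φ, hf, hφ, hH⟩ := h
  have hadj : ∀ i, (hi : i < n) → (pathG n).Adj ⟨i, by omega⟩ ⟨i + 1, by omega⟩ := fun i hi =>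
    pathG_adj.2 (Or.inl rfl)
  refine ⟨fun i => if hi : i < n + 1 then f ⟨i, hi⟩ else f 0,
    fun i => if hi : i < n then φ s(⟨i, by omega⟩, ⟨i + 1, by omega⟩) else ∅, ?_, ?_, ?_⟩
  · intro i hi j hj hij
    simp only [Nat.lt_succ_of_le hi, Nat.lt_succ_of_le hj, dif_pos] at hij
    simpa using hf hij
  · intro i hi j hj hij
    simp only [hi, hj, dif_pos] at hij
    have := hφ (hadj i hi) (hadj j hj) hij
    rw [Sym2.eq_iff] at this
    simp only [Fin.mk.injEq] at this
    omega
  · intro i hi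
    have h1 := hH _ ((SimpleGraph.mem_edgeSet _).2 (hadj i hi))
    simp only [hi, dif_pos, show i < n + 1 by omega, show i + 1 < n + 1 by omega]
    exact ⟨h1.1, h1.2 _ (by simp), h1.2 _ (by simp)⟩

lemma bseq_union_copy {n₁ n₂ : ℕ} {u₁ u₂ : ℕ → V} {g₁ g₂ : ℕ → Finset V}
    (h₁ : BSeq H n₁ u₁ g₁) (h₂ : BSeq H n₂ u₂ g₂)
    (hu : ∀ i ≤ n₁, ∀ j ≤ n₂, u₁ i ≠ u₂ j) (hg : ∀ i < n₁, ∀ j < n₂, g₁ i ≠ g₂ j) :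
    IsBergeCopy ((pathG n₁).sum (pathG n₂)) H := by
  let F : Fin (n₁ + 1) ⊕ Fin (n₂ + 1) → Fin (n₁ + 1) ⊕ Fin (n₂ + 1) → Finset V
    | Sum.inl i, Sum.inl j => g₁ (min i j : ℕ)
    | Sum.inr i, Sum.inr j => g₂ (min i j : ℕ)
    | _, _ => ∅
  have hF : ∀ a b, F a b = F b a := by
    rintro (a | a) (b | b)
    · exact congrArg g₁ (min_comm _ _)
    · rfl
    · rfl
    · exact congrArg g₂ (min_comm _ _)
  refine ⟨Sum.elim (fun i => u₁ i) (fun i => u₂ i), Sym2.lift ⟨F, hF⟩, ?_, ?_, ?_⟩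
  · rintro (a | a) (b | b) hab
    · simp only [Sum.elim_inl] at hab
      rw [Fin.ext (h₁.1 _ (by omega) _ (by omega) hab)]
    · exact absurd hab (hu _ (by omega) _ (by omega))
    · exact absurd hab.symm (hu _ (by omega) _ (by omega))
    · simp only [Sum.elim_inr] at hab
      rw [Fin.ext (h₂.1 _ (by omega) _ (by omega) hab)]
  · intro e he e' he' hee
    induction e using Sym2.ind with | _ a b
    induction e' using Sym2.ind with | _ c d
    simp only [Sym2.lift_mk] at hee
    rw [SimpleGraph.mem_edgeSet] at he he'
    rw [Sym2.eq_iff]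
    rcases a with a | a <;> rcases b with b | b
    · rcases c with c | c <;> rcases d with d | d
      · have a1 := pathG_adj.1 (SimpleGraph.sum_adj_inl.1 he)
        have a2 := pathG_adj.1 (SimpleGraph.sum_adj_inl.1 he')
        have := h₁.2.1 _ (by omega) _ (by omega) hee
        simp only [Sum.inl.injEq, Fin.ext_iff]
        omega
      · simp at he'
      · simp at he'
      · have a1 := pathG_adj.1 (SimpleGraph.sum_adj_inl.1 he)
        have a2 := pathG_adj.1 (SimpleGraph.sum_adj_inr.1 he')
        exact absurd hee (hg _ (by omega) _ (by omega))
    · simp at he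
    · simp at he
    · rcases c with c | c <;> rcases d with d | d
      · have a1 := pathG_adj.1 (SimpleGraph.sum_adj_inr.1 he)
        have a2 := pathG_adj.1 (SimpleGraph.sum_adj_inl.1 he')
        exact absurd hee.symm (hg _ (by omega) _ (by omega))
      · simp at he'
      · simp at he'
      · have a1 := pathG_adj.1 (SimpleGraph.sum_adj_inr.1 he)
        have a2 := pathG_adj.1 (SimpleGraph.sum_adj_inr.1 he')
        have := h₂.2.1 _ (by omega) _ (by omega) hee
        simp only [Sum.inr.injEq, Fin.ext_iff]
        omega
  · intro e he
    induction e using Sym2.ind with | _ a b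
    rw [SimpleGraph.mem_edgeSet] at he
    simp only [Sym2.lift_mk, Sym2.mem_iff]
    rcases a with a | a <;> rcases b with b | b
    · have a1 := pathG_adj.1 (SimpleGraph.sum_adj_inl.1 he)
      have h3 := h₁.2.2 (min a b : ℕ) (by omega)
      refine ⟨h3.1, ?_⟩
      have h4 : u₁ a ∈ g₁ (min a b : ℕ) ∧ u₁ b ∈ g₁ (min a b : ℕ) := by
        rcases a1 with a1 | a1
        · rw [min_eq_left (by omega : (a : ℕ) ≤ b)] at *; rw [← a1]; exact h3.2
        · rw [min_eq_right (by omega : (b : ℕ) ≤ a)] at *; rw [← a1]; exact h3.2.symm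
      rintro x (rfl | rfl)
      · exact h4.1
      · exact h4.2
    · simp at he
    · simp at he
    · have a1 := pathG_adj.1 (SimpleGraph.sum_adj_inr.1 he)
      have h3 := h₂.2.2 (min a b : ℕ) (by omega)
      refine ⟨h3.1, ?_⟩
      have h4 : u₂ a ∈ g₂ (min a b : ℕ) ∧ u₂ b ∈ g₂ (min a b : ℕ) := by
        rcases a1 with a1 | a1
        · rw [min_eq_left (by omega : (a : ℕ) ≤ b)] at *; rw [← a1]; exact h3.2
        · rw [min_eq_right (by omega : (b : ℕ) ≤ a)] at *; rw [← a1]; exact h3.2.symm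
      rintro x (rfl | rfl)
      · exact h4.1
      · exact h4.2

/-- Two disjoint paths of the incidence graph give a Berge copy of the union. -/
lemma union_copy_of_paths {n₁ n₂ : ℕ} {p q : List (V ⊕ Finset V)} (hp : BPath H p)
    (hq : BPath H q) (hp0 : ∃ x, p[0]? = some (Sum.inl x)) (hq0 : ∃ x, q[0]? = some (Sum.inl x))
    (hpl : 2 * n₁ + 1 ≤ p.length) (hql : 2 * n₂ + 1 ≤ q.length) (hd : ∀ z ∈ p, z ∉ q) :
    IsBergeCopy ((pathG n₁).sum (pathG n₂)) H := by
  obtain ⟨u, g, hu, hg, h1, h2, h3⟩ := hp.seqs hp0 n₁ hpl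
  obtain ⟨u', g', hu', hg', h1', h2', h3'⟩ := hq.seqs hq0 n₂ hql
  refine bseq_union_copy ⟨h1, h2, h3⟩ ⟨h1', h2', h3'⟩ ?_ ?_
  · intro i hi j hj hij
    have a := List.mem_of_getElem? (hu i hi)
    have b := List.mem_of_getElem? (hu' j hj)
    exact hd _ a (hij ▸ b)
  · intro i hi j hj hij
    have a := List.mem_of_getElem? (hg i hi)
    have b := List.mem_of_getElem? (hg' j hj)
    exact hd _ a (hij ▸ b)

/-- A path with `n₁ + n₂ + 1` hyperedges contains both paths: drop one hyperedge in between. -/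
lemma union_copy_of_path {n₁ n₂ : ℕ} {p : List (V ⊕ Finset V)} (hp : BPath H p)
    (hp0 : ∃ x, p[0]? = some (Sum.inl x)) (hpl : 2 * (n₁ + n₂ + 1) + 1 ≤ p.length) :
    IsBergeCopy ((pathG n₁).sum (pathG n₂)) H := by
  refine union_copy_of_paths (p := p.take (2 * n₁ + 1)) (q := p.drop (2 * (n₁ + 1)))
    (hp.sublist_take _) (hp.sublist_drop _) ?_ ?_ ?_ ?_ ?_
  · obtain ⟨x, hx⟩ := hp0
    exact ⟨x, by rw [List.getElem?_take_of_lt (by omega), hx]⟩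
  · obtain ⟨x, hx⟩ := (hp.parity hp0 (n₁ + 1)).1 (by omega)
    exact ⟨x, by rw [List.getElem?_drop, add_zero, hx]⟩
  · rw [List.length_take]; omega
  · rw [List.length_drop]; omega
  · intro z hz hz'
    rw [show 2 * (n₁ + 1) = (2 * n₁ + 1) + 1 by ring] at hz'
    have h2 : z ∈ p.drop (2 * n₁ + 1) := by
      rw [← List.drop_drop] at hz'
      exact List.mem_of_mem_drop hz'
    have h3 := hp.2
    rw [← List.take_append_drop (2 * n₁ + 1) p] at h3
    exact (List.nodup_append.1 h3).2.2 z hz z h2 rfl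

end

/-! ### An inequality between binomial coefficients -/

section

lemma le_choose_mid : ∀ (n j : ℕ), 1 ≤ j → j < n → n ≤ n.choose j
  | 0, _, _, h => absurd h (by omega)
  | n + 1, 0, h, _ => absurd h (by omega)
  | n + 1, j + 1, _, h => by
    rw [Nat.choose_succ_succ']
    rcases Nat.eq_zero_or_pos j with rfl | hj
    · simp
    · have h1 := le_choose_mid n j hj (by omega)
      have h2 : 0 < n.choose (j + 1) := Nat.choose_pos (by omega)
      omega

/-- Lowering the top entry by one costs at least `k - 1`. -/
lemma choose_gap {k s : ℕ} (hs : 2 ≤ s) (hk : s + 1 ≤ k) :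
    (k - 1).choose s + (k - 1) ≤ k.choose s := by
  obtain ⟨k, rfl⟩ : ∃ k', k = k' + 1 := ⟨k - 1, by omega⟩
  obtain ⟨s, rfl⟩ : ∃ s', s = s' + 1 := ⟨s - 1, by omega⟩
  rw [Nat.choose_succ_succ']
  have := le_choose_mid k s (by omega) (by omega)
  simp only [Nat.add_sub_cancel]
  omega

lemma choose_add_le (n s t : ℕ) : (n + t).choose (s + 1) ≤ n.choose (s + 1) + t * (n + t).choose s := by
  induction t with
  | zero => simp
  | succ t ih =>
    rw [← add_assoc, Nat.choose_succ_succ', add_mul, one_mul]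
    have h1 : (n + t).choose s ≤ (n + t + 1).choose s := Nat.choose_le_choose _ (by omega)
    have h2 := Nat.mul_le_mul_left t h1
    omega

/-- The two counting inequalities at the ends of a longest path leave only the case where the path
has one edge. Here `s = r - 1`, `m = |N|`, the path has `h` edges, its rotations have `t` ends, and
`b` counts the hyperedges that are the only entrance from some vertex of `A`. -/
lemma num_core {s k m a b h t n₀ : ℕ} (hs : 2 ≤ s) (hk : s + 7 ≤ k) (hm : m = a + b) (hm1 : 1 ≤ m)
    (ht : 1 ≤ t) (hth : t ≤ h) (hmh : m + h ≤ k + 1) (hn : n₀ ≤ a + h) (htn : t ≤ n₀)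
    (h1 : k.choose s ≤ (m - 1 + t).choose s + h + b)
    (h2 : t * k.choose s + (n₀ - t).choose (s + 1) ≤ n₀.choose (s + 1) + h + b) :
    h = 1 ∧ b = 0 ∧ m = k := by
  have g1 := choose_gap (k := k) hs (by omega)
  have g2 := choose_gap (k := k - 1) hs (by omega)
  rw [show k - 1 - 1 = k - 2 by omega] at g2
  have mono : ∀ {x y : ℕ}, x ≤ y → x.choose s ≤ y.choose s := fun h => Nat.choose_le_choose _ h
  -- by the first inequality, at least `k - m` vertices are ends of rotations
  have ht' : k ≤ m + t := by
    by_contra hcon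
    have := mono (show m - 1 + t ≤ k - 2 by omega)
    omega
  have e1 : n₀.choose (s + 1) = (n₀ - 1).choose s + (n₀ - 1).choose (s + 1) := by
    obtain ⟨x, rfl⟩ : ∃ x, n₀ = x + 1 := ⟨n₀ - 1, by omega⟩
    exact Nat.choose_succ_succ' _ _
  rcases (show t = 1 ∨ t = 2 ∨ 3 ≤ t by omega) with rfl | rfl | ht3
  · rw [one_mul] at h2
    have h3 : k.choose s ≤ (n₀ - 1).choose s + h + b := by omega
    have hb : b = 0 := by
      by_contra hb
      have := mono (show n₀ - 1 ≤ k - 1 by omega)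
      by_cases hb2 : 2 ≤ b
      · have := mono (show n₀ - 1 ≤ k - 2 by omega)
        omega
      · omega
    subst hb
    have hmk : m = k := by
      by_contra hmk
      have := mono (show m - 1 + 1 ≤ k - 1 by omega)
      omega
    omega
  · exfalso
    have e2 : (n₀ - 1).choose (s + 1) = (n₀ - 2).choose s + (n₀ - 2).choose (s + 1) := by
      obtain ⟨x, rfl⟩ : ∃ x, n₀ = x + 2 := ⟨n₀ - 2, by omega⟩
      exact Nat.choose_succ_succ' _ _
    by_cases hb : b = 0
    · have := mono (show n₀ - 1 ≤ k by omega)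
      have := mono (show n₀ - 2 ≤ k - 1 by omega)
      omega
    · have := mono (show n₀ - 1 ≤ k - 1 by omega)
      have := mono (show n₀ - 2 ≤ k - 2 by omega)
      omega
  -- with at least three ends, three Pascal steps already lose more than `h + b`
  · exfalso
    have e2 : (n₀ - 1).choose (s + 1) = (n₀ - 2).choose s + (n₀ - 2).choose (s + 1) := by
      obtain ⟨x, rfl⟩ : ∃ x, n₀ = x + 2 := ⟨n₀ - 2, by omega⟩
      exact Nat.choose_succ_succ' _ _
    have e3 : (n₀ - 2).choose (s + 1) = (n₀ - 3).choose s + (n₀ - 3).choose (s + 1) := by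
      obtain ⟨x, rfl⟩ : ∃ x, n₀ = x + 3 := ⟨n₀ - 3, by omega⟩
      exact Nat.choose_succ_succ' _ _
    have h4 := choose_add_le (n₀ - t) s (t - 3)
    rw [show n₀ - t + (t - 3) = n₀ - 3 by omega] at h4
    have := mono (show n₀ - 1 ≤ k by omega)
    have := mono (show n₀ - 2 ≤ k - 1 by omega)
    have := mono (show n₀ - 3 ≤ k - 2 by omega)
    have h5 := Nat.mul_le_mul_left (t - 3) (mono (show n₀ - 3 ≤ k by omega))
    have h6 : t * k.choose s = (t - 3) * k.choose s + 3 * k.choose s := by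
      rw [← add_mul]; congr 1; omega
    omega

end

/-! ### Rotating the end of a longest path -/

section

variable {V : Type*} {H : Finset (Finset V)} {A : Finset V}

/-- The vertices `x` and `x'` are joined by a Berge path whose interior lies in the component of `v`.
The interior has at least two hyperedges (and hence at least three nodes). -/
def Conn (H : Finset (Finset V)) (A : Finset V) (v x x' : V) : Prop :=
  ∃ l : List (V ⊕ Finset V), BPath H (Sum.inl x :: (l ++ [Sum.inl x'])) ∧
    (∀ z ∈ l, z ∈ comp H A v) ∧ 3 ≤ l.length

/-- There is a Berge path with `h` hyperedges that starts at `x` and otherwise lies in the component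
of `v`. -/
def EndP (H : Finset (Finset V)) (A : Finset V) (v x : V) (h : ℕ) : Prop :=
  ∃ l : List (V ⊕ Finset V), BPath H (Sum.inl x :: l) ∧
    (∀ z ∈ l, z ∈ comp H A v) ∧ l.length = 2 * h

/-- Pósa rotation: a hyperedge `e` off the path through the last vertex `y` and through an earlier
vertex `w` gives a path on the same vertices that ends in the successor `z` of `w`. -/
lemma rotate {p : List (V ⊕ Finset V)} (hp : BPath H p) {j : ℕ} {w z y : V} {e : Finset V}
    (hw : p[j]? = some (Sum.inl w)) (hz : p[j + 2]? = some (Sum.inl z))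
    (hy : p.getLast? = some (Sum.inl y)) (heH : e ∈ H) (hwe : w ∈ e) (hye : y ∈ e)
    (hep : Sum.inr e ∉ p) :
    BPath H (p.take (j + 1) ++ Sum.inr e :: (p.drop (j + 2)).reverse) ∧
      (p.take (j + 1) ++ Sum.inr e :: (p.drop (j + 2)).reverse).getLast? = some (Sum.inl z) := by
  have hjl : j + 2 < p.length := by
    by_contra hcon
    rw [List.getElem?_eq_none (by omega)] at hz; cases hz
  have hlast : ((p.drop (j + 2)).reverse).getLast? = some (Sum.inl z) := by
    rw [List.getLast?_reverse, List.head?_drop, hz]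
  have hhead : ((p.drop (j + 2)).reverse).head? = some (Sum.inl y) := by
    rw [List.head?_reverse, List.getLast?_drop, if_neg (by omega), hy]
  have htl : (p.take (j + 1)).getLast? = some (Sum.inl w) := by
    rw [List.getLast?_take]
    simp [hw]
  have hdis : ∀ q ∈ p.take (j + 1), q ∉ p.drop (j + 2) := by
    intro q hq hq'
    have h2 : q ∈ p.drop (j + 1) := by
      rw [show j + 2 = (j + 1) + 1 by ring, ← List.drop_drop] at hq'
      exact List.mem_of_mem_drop hq'
    have h3 := hp.2
    rw [← List.take_append_drop (j + 1) p] at h3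
    exact (List.nodup_append.1 h3).2.2 q hq q h2 rfl
  have h1 : BPath H ([Sum.inr e] ++ (p.drop (j + 2)).reverse) := by
    refine BPath.append ⟨by simp, by simp⟩ (hp.sublist_drop _).reverse ?_ ?_
    · intro q hq hq'
      simp only [List.mem_singleton] at hq
      subst hq
      exact hep (List.mem_of_mem_drop (List.mem_reverse.1 hq'))
    · rw [hhead]; simp [heH, hye]
  refine ⟨BPath.append (hp.sublist_take _) h1 ?_ ?_, ?_⟩
  · intro q hq hq'
    rcases List.mem_cons.1 hq' with h | h
    · subst h
      exact hep (List.mem_of_mem_take hq)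
    · exact hdis q hq (List.mem_reverse.1 h)
  · rw [htl]; simp [heH, hwe]
  · rw [List.getLast?_append, List.getLast?_cons, hlast]; rfl

variable [DecidableEq V]

/-- The number of `r`-subsets of `s` that meet `R ⊆ s`, in subtraction-free form. -/
lemma card_powersetCard_meet (s R : Finset V) (r : ℕ) (hR : R ⊆ s) :
    #((powersetCard r s).filter (fun e => ¬ Disjoint e R)) + (#s - #R).choose r = (#s).choose r := by
  have h1 : (powersetCard r s).filter (fun e => Disjoint e R) = powersetCard r (s \ R) := by
    ext e
    simp only [mem_filter, mem_powersetCard, subset_sdiff]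
    tauto
  have h2 := card_filter_add_card_filter_not (s := powersetCard r s) (fun e => Disjoint e R)
  rw [h1, card_powersetCard, card_powersetCard, card_sdiff_of_subset hR] at h2
  omega

/-- Counting at the ends of the rotations of a longest path from `x` into a component. -/
lemma end_count {W : Finset V} {r k : ℕ} {v₀ x : V} {h : ℕ}
    (hcard : ∀ e ∈ H, e.card = r) (hsub : ∀ e ∈ H, e ⊆ W)
    (hS : ∀ S ⊆ W, #S ≤ k → #S * k.choose (r - 1) ≤ #(H.filter (fun e => ¬ Disjoint e S)))
    (hv₀ : v₀ ∉ A) (hx : x ∈ A) (hh : 1 ≤ h) (hhk : h ≤ k)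
    {l : List (V ⊕ Finset V)} (hl : BPath H (Sum.inl x :: l)) (hlc : ∀ z ∈ l, z ∈ comp H A v₀)
    (hll : l.length = 2 * h) (hmax : ¬ EndP H A v₀ x (h + 1))
    (Bad : Finset (Finset V)) (Ast : Finset V)
    (hBad : ∀ e ∈ H, Sum.inr e ∈ comp H A v₀ → e ∉ Bad → ∀ w ∈ e, w ∈ A → w ∈ Ast) :
    ∃ t n₀, 1 ≤ t ∧ t ≤ h ∧ n₀ ≤ #Ast + h ∧ t ≤ n₀ ∧
      k.choose (r - 1) ≤ (#(Ast.erase x) + t).choose (r - 1) + h + #Bad ∧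
      t * k.choose (r - 1) + (n₀ - t).choose r ≤ n₀.choose r + h + #Bad := by
  classical
  have hlen : (Sum.inl x :: l).length = 2 * h + 1 := by simp [hll]
  obtain ⟨u, g, hu, hg, huinj, hginj, hinc⟩ := hl.seqs ⟨x, rfl⟩ h (by omega)
  have hmem := seqs_mem hlen hu hg
  have hu0 : u 0 = x := by simpa using (hu 0 (by omega)).symm
  set U := (Icc 1 h).image u with hU
  set X := (range h).image g with hX
  have hUc : #U ≤ h := card_image_le.trans (by simp)
  have hXc : #X ≤ h := card_image_le.trans (by simp)
  have hxl : Sum.inl x ∉ l := (List.nodup_cons.1 hl.2).1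
  -- no path of maximal length can be extended beyond its last vertex
  have M : ∀ (l' : List (V ⊕ Finset V)) (z : V), BPath H (Sum.inl x :: l') →
      (∀ q ∈ l', q ∈ comp H A v₀) → l'.length = 2 * h →
      (Sum.inl x :: l').getLast? = some (Sum.inl z) → ∀ e ∈ H, z ∈ e → Sum.inr e ∉ l' →
      ∀ w ∈ e, w ∈ A ∨ Sum.inl w ∈ l' := by
    intro l' z hl' hc' hlen' hlast e he hze hel w hwe
    by_contra hcon
    push Not at hcon
    have hzl : Sum.inl z ∈ l' := by
      rw [List.getLast?_cons] at hlast
      rcases hq : l'.getLast? with _ | q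
      · rw [List.getLast?_eq_none_iff] at hq; simp [hq] at hlen'; omega
      · rw [hq] at hlast; simp at hlast; subst hlast
        exact List.mem_of_getLast? hq
    have hzA := comp_notMem hv₀ (hc' _ hzl)
    have hec := comp_edge_of (hc' _ hzl) hzA he hze
    apply hmax
    refine ⟨l' ++ [Sum.inr e, Sum.inl w], ?_, ?_, ?_⟩
    · rw [← List.cons_append]
      refine BPath.append hl' ⟨?_, ?_⟩ ?_ ?_
      · simp [he, hwe]
      · simp
      · intro q hq hq'
        simp only [List.mem_cons, List.not_mem_nil, or_false] at hq hq'
        rcases hq' with rfl | rfl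
        · rcases hq with h | h
          · cases h
          · exact hel h
        · rcases hq with h | h
          · cases h; exact hcon.1 hx
          · exact hcon.2 h
      · rw [hlast]; simp [he, hze]
    · intro q hq
      simp only [List.mem_append, List.mem_cons, List.not_mem_nil, or_false] at hq
      rcases hq with h | rfl | rfl
      · exact hc' _ h
      · exact hec
      · exact comp_vert_of hec hcon.1 hwe
    · simp [hlen']; omega
  -- the ends of all paths of this length on the same vertices, with new hyperedges inside `A ∪ U`
  set R := U.filter (fun z => ∃ l' : List (V ⊕ Finset V), BPath H (Sum.inl x :: l') ∧
      (∀ q ∈ l', q ∈ comp H A v₀) ∧ l'.length = 2 * h ∧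
      (Sum.inl x :: l').getLast? = some (Sum.inl z) ∧ (∀ w, Sum.inl w ∈ l' → w ∈ U) ∧
      (∀ e, Sum.inr e ∈ l' → e ∈ X ∨ e ⊆ A ∪ U)) with hR
  have memU : ∀ w, Sum.inl w ∈ l → w ∈ U := by
    intro w hw
    rcases (hmem _).1 (List.mem_cons_of_mem _ hw) with ⟨i, hi, h⟩ | ⟨i, hi, h⟩
    · cases h
      refine mem_image.2 ⟨i, mem_Icc.2 ⟨?_, hi⟩, rfl⟩
      by_contra h0
      have : i = 0 := by omega
      rw [this, hu0] at hw; exact hxl hw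
    · cases h
  have Umem : ∀ w ∈ U, Sum.inl w ∈ l := by
    intro w hw
    obtain ⟨i, hi, rfl⟩ := mem_image.1 hw
    rw [mem_Icc] at hi
    have := (hmem (Sum.inl (u i))).2 (Or.inl ⟨i, hi.2, rfl⟩)
    rcases List.mem_cons.1 this with h | h
    · have h1 := huinj i hi.2 0 (by omega) (by rw [hu0]; exact Sum.inl.inj h)
      omega
    · exact h
  have memX : ∀ e, Sum.inr e ∈ l ↔ e ∈ X := by
    intro e
    rw [hX, mem_image]
    constructor
    · intro he
      rcases (hmem _).1 (List.mem_cons_of_mem _ he) with ⟨i, hi, h⟩ | ⟨i, hi, h⟩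
      · cases h
      · cases h; exact ⟨i, mem_range.2 hi, rfl⟩
    · rintro ⟨i, hi, rfl⟩
      have := (hmem (Sum.inr (g i))).2 (Or.inr ⟨i, mem_range.1 hi, rfl⟩)
      rcases List.mem_cons.1 this with h | h
      · cases h
      · exact h
  have hUcomp : ∀ w ∈ U, Sum.inl w ∈ comp H A v₀ := fun w hw => hlc _ (Umem w hw)
  have hUA : ∀ w ∈ U, w ∉ A := fun w hw => comp_notMem hv₀ (hUcomp w hw)
  have hUW : U ⊆ W := by
    intro w hw
    obtain ⟨i, hi, rfl⟩ := mem_image.1 hw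
    rw [mem_Icc] at hi
    have := hinc (i - 1) (by omega)
    rw [show i - 1 + 1 = i by omega] at this
    exact hsub _ this.1 this.2.2
  have R1 : ∀ z ∈ R, ∀ e ∈ H, z ∈ e → e ∈ X ∨ e ⊆ A ∪ U := by
    intro z hz e he hze
    obtain ⟨-, l', h1, h2, h3, h4, h5, h6⟩ := mem_filter.1 hz
    by_cases hel : Sum.inr e ∈ l'
    · exact h6 e hel
    · right
      intro w hw
      rcases M l' z h1 h2 h3 h4 e he hze hel w hw with h | h
      · exact mem_union_left _ h
      · exact mem_union_right _ (h5 w h)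
  have R1' : ∀ z ∈ R, ∀ e ∈ H, z ∈ e → e ∈ X ∪ Bad ∨ e ⊆ Ast ∪ U := by
    intro z hz e he hze
    by_cases heB : e ∈ Bad
    · exact Or.inl (mem_union_right _ heB)
    rcases R1 z hz e he hze with h | h
    · exact Or.inl (mem_union_left _ h)
    · right
      intro w hw
      have hzU := (mem_filter.1 hz).1
      rcases mem_union.1 (h hw) with h' | h'
      · exact mem_union_left _
          (hBad e he (comp_edge_of (hUcomp z hzU) (hUA z hzU) he hze) heB w hw h')
      · exact mem_union_right _ h'
  have hlast : (Sum.inl x :: l).getLast? = some (Sum.inl (u h)) := by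
    rw [List.getLast?_eq_getElem?, hlen, Nat.add_sub_cancel]; exact hu h le_rfl
  have hyU : u h ∈ U := mem_image.2 ⟨h, mem_Icc.2 ⟨hh, le_rfl⟩, rfl⟩
  have hyR : u h ∈ R := mem_filter.2 ⟨hyU, l, hl, hlc, hll, hlast, memU, fun e he => Or.inl ((memX e).1 he)⟩
  have R2 : ∀ i < h, ∀ e ∈ H, u h ∈ e → u i ∈ e → e ∉ X → u (i + 1) ∈ R := by
    intro i hi e he hye hie heX
    have hel : Sum.inr e ∉ l := fun h => heX ((memX e).1 h)
    have hrot := rotate hl (hu i hi.le) (show (Sum.inl x :: l)[2 * i + 2]? = some (Sum.inl (u (i + 1)))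
      from hu (i + 1) hi) hlast he hie hye (by
        intro h; rcases List.mem_cons.1 h with h | h
        · cases h
        · exact hel h)
    rw [List.take_succ_cons, List.drop_succ_cons, List.cons_append] at hrot
    have hsubl : ∀ q ∈ l.take (2 * i) ++ Sum.inr e :: (l.drop (2 * i + 1)).reverse,
        q ∈ l ∨ q = Sum.inr e := by
      intro q hq
      rcases List.mem_append.1 hq with h | h
      · exact Or.inl (List.mem_of_mem_take h)
      · rcases List.mem_cons.1 h with h | h
        · exact Or.inr h
        · exact Or.inl (List.mem_of_mem_drop (List.mem_reverse.1 h))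
    refine mem_filter.2 ⟨mem_image.2 ⟨i + 1, mem_Icc.2 ⟨by omega, hi⟩, rfl⟩, _, hrot.1, ?_, ?_,
      hrot.2, ?_, ?_⟩
    · intro q hq
      rcases hsubl q hq with h | rfl
      · exact hlc q h
      · exact comp_edge_of (hUcomp _ hyU) (hUA _ hyU) he hye
    · simp [hll]; omega
    · intro w hw
      rcases hsubl _ hw with h | h
      · exact memU w h
      · cases h
    · intro e' he'
      rcases hsubl _ he' with h | h
      · exact Or.inl ((memX e').1 h)
      · cases h
        exact R1 _ hyR e he hye
  have hRU : R ⊆ U := filter_subset _ _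
  have hRh : #R ≤ h := (card_le_card hRU).trans hUc
  refine ⟨#R, #(Ast ∪ U), card_pos.2 ⟨_, hyR⟩, hRh, ?_, ?_, ?_, ?_⟩
  · exact (card_union_le _ _).trans (by omega)
  · exact card_le_card (hRU.trans subset_union_right)
  · have h1 := hS {u h} (by simpa using hUW hyU) (by simp; omega)
    rw [card_singleton, one_mul] at h1
    -- the neighbours of the last vertex on the path are predecessors of ends
    set I := (range h).filter (fun i => u (i + 1) ∈ R) with hI
    set P := I.image u with hP
    have hPR : #P ≤ #R := by
      calc #P ≤ #I := card_image_le
        _ = #(I.image (fun i => u (i + 1))) := by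
            rw [card_image_of_injOn]
            intro i hi j hj hij
            have hi' := mem_range.1 (mem_filter.1 hi).1
            have hj' := mem_range.1 (mem_filter.1 hj).1
            have := huinj (i + 1) hi' (j + 1) hj' hij
            omega
        _ ≤ #R := card_le_card (by
            intro z hz
            obtain ⟨i, hi, rfl⟩ := mem_image.1 hz
            exact (mem_filter.1 hi).2)
    have h2 : H.filter (fun e => ¬ Disjoint e {u h}) ⊆
        (X ∪ Bad) ∪ (powersetCard (r - 1) (Ast.erase x ∪ P)).image (insert (u h)) := by
      intro e he
      obtain ⟨he, hye⟩ := mem_filter.1 he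
      rw [disjoint_singleton_right, not_not] at hye
      by_cases heX : e ∈ X ∪ Bad
      · exact mem_union_left _ heX
      rcases R1' _ hyR e he hye with hs | hs
      · exact mem_union_left _ hs
      refine mem_union_right _ (mem_image.2 ⟨e.erase (u h), mem_powersetCard.2 ⟨?_, ?_⟩,
        insert_erase hye⟩)
      · have heX' : e ∉ X := fun h => heX (mem_union_left _ h)
        have key : ∀ i < h, u i ∈ e → u i ∈ P := fun i hi hie =>
          mem_image.2 ⟨i, mem_filter.2 ⟨mem_range.2 hi, R2 i hi e he hye hie heX'⟩, rfl⟩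
        intro w hw
        obtain ⟨hwy, hwe⟩ := mem_erase.1 hw
        by_cases hwx : w = x
        · subst hwx
          exact mem_union_right _ (by rw [← hu0]; exact key 0 (by omega) (by rw [hu0]; exact hwe))
        rcases mem_union.1 (hs hwe) with h' | h'
        · exact mem_union_left _ (mem_erase.2 ⟨hwx, h'⟩)
        · obtain ⟨i, hi, rfl⟩ := mem_image.1 h'
          rw [mem_Icc] at hi
          refine mem_union_right _ (key i ?_ hwe)
          rcases Nat.lt_or_ge i h with hlt | hge
          · exact hlt
          · exact absurd (by rw [show i = _ from le_antisymm hi.2 hge]) hwy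
      · rw [card_erase_of_mem hye, hcard e he]
    have h3 := card_le_card h2
    have h4 := card_union_le (X ∪ Bad) ((powersetCard (r - 1) (Ast.erase x ∪ P)).image (insert (u h)))
    have h5 := card_union_le X Bad
    have h6 : #((powersetCard (r - 1) (Ast.erase x ∪ P)).image (insert (u h))) ≤
        (#(Ast.erase x) + #R).choose (r - 1) := by
      refine card_image_le.trans ?_
      rw [card_powersetCard]
      exact Nat.choose_le_choose _ ((card_union_le _ _).trans (by omega))
    omega
  · have h1 := hS R (hRU.trans hUW) (by omega)
    have h2 : H.filter (fun e => ¬ Disjoint e R) ⊆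
        (X ∪ Bad) ∪ (powersetCard r (Ast ∪ U)).filter (fun e => ¬ Disjoint e R) := by
      intro e he
      obtain ⟨he, hd⟩ := mem_filter.1 he
      obtain ⟨z, hze, hzR⟩ := not_disjoint_iff.1 hd
      rcases R1' z hzR e he hze with h | h
      · exact mem_union_left _ h
      · exact mem_union_right _ (mem_filter.2 ⟨mem_powersetCard.2 ⟨h, hcard e he⟩, hd⟩)
    have h3 := card_le_card h2
    have h4 := card_union_le (X ∪ Bad) ((powersetCard r (Ast ∪ U)).filter (fun e => ¬ Disjoint e R))
    have h5 := card_union_le X Bad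
    have h6 := card_powersetCard_meet (Ast ∪ U) R r (hRU.trans subset_union_right)
    omega

end

/-! ### Local structure of a component -/

section

variable {V : Type*} {H : Finset (Finset V)} {A : Finset V}
variable [DecidableEq V]

/-- The vertex `y` is full over the core `K`: it lies outside `K`, and its hyperedges are exactly the
`r`-sets through `y` that are contained in `K ∪ {y}`. -/
def Full (H : Finset (Finset V)) (r : ℕ) (K : Finset V) (y : V) : Prop :=
  y ∉ K ∧ ∀ e, (e ∈ H ∧ y ∈ e) ↔ (e.card = r ∧ y ∈ e ∧ e ⊆ insert y K)

omit [DecidableEq V] in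
/-- Two vertices of `A` lying on distinct hyperedges of a component are joined through it. -/
lemma conn_of_edges {v x x' : V} {e e' : Finset V} (hv : v ∉ A) (hx : x ∈ A) (hx' : x' ∈ A)
    (hxx : x ≠ x') (he : Sum.inr e ∈ comp H A v) (he' : Sum.inr e' ∈ comp H A v) (hee : e ≠ e')
    (hxe : x ∈ e) (hxe' : x' ∈ e') : Conn H A v x x' := by
  obtain ⟨l, h1, h2, h3, h4, h5⟩ := comp_conn he he' hee
  have hm : ∀ w ∈ A, Sum.inl w ∉ l := fun w hw hl => comp_notMem hv (h2 _ hl) hw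
  have h6 : BPath H (l ++ [Sum.inl x']) := by
    refine BPath.append h1 ⟨by simp, by simp⟩ ?_ ?_
    · intro z hz hz'
      simp only [List.mem_singleton] at hz'
      subst hz'
      exact hm _ hx' hz
    · rw [h5]; simp [(comp_edge he').1, hxe']
  refine ⟨l, ?_, h2, h3⟩
  refine BPath.append (l₁ := [Sum.inl x]) (l₂ := l ++ [Sum.inl x']) ⟨by simp, by simp⟩ h6 ?_ ?_
  · intro z hz hz'
    simp only [List.mem_singleton] at hz
    subst hz
    rcases List.mem_append.1 hz' with h | h
    · exact hm _ hx h
    · simp only [List.mem_singleton] at h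
      exact hxx (Sum.inl.inj h)
  · rw [List.head?_append, h4]; simp [(comp_edge he).1, hxe]

omit [DecidableEq V] in
lemma endP_one {v x y : V} {e : Finset V} (hx : x ∈ A)
    (he : Sum.inr e ∈ comp H A v) (hxe : x ∈ e) (hy : y ∉ A) (hye : y ∈ e) :
    BPath H [Sum.inl x, Sum.inr e, Sum.inl y] ∧
      ∀ z ∈ [Sum.inr e, Sum.inl y], z ∈ comp H A v := by
  have h1 := comp_edge he
  have hyc := comp_vert_of he hy hye
  refine ⟨⟨?_, ?_⟩, ?_⟩
  · simp [h1.1, hxe, hye]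
  · simp; rintro rfl; exact hy hx
  · intro z hz
    simp only [List.mem_cons, List.not_mem_nil, or_false] at hz
    rcases hz with rfl | rfl
    · exact he
    · exact hyc

/-- If `|N| = k`, all hyperedges of the component meet `A` only in `N`, and no path with two
hyperedges leads from `x ∈ N` into the component, then the component contains a full vertex. -/
lemma full_of_short {W N : Finset V} {r k : ℕ} {v₀ x : V} (hr : 3 ≤ r) (hk : r + 6 ≤ k)
    (hcard : ∀ e ∈ H, e.card = r) (hsub : ∀ e ∈ H, e ⊆ W)
    (hS : ∀ S ⊆ W, #S ≤ k → #S * k.choose (r - 1) ≤ #(H.filter (fun e => ¬ Disjoint e S)))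
    (hNA : N ⊆ A) (hNk : #N = k) (hx : x ∈ N)
    (hN : ∀ e ∈ H, Sum.inr e ∈ comp H A v₀ → ∀ w ∈ e, w ∈ A → w ∈ N)
    (hex : ∃ e, Sum.inr e ∈ comp H A v₀ ∧ x ∈ e) (hmax : ¬ EndP H A v₀ x 2) :
    ∃ y, Sum.inl y ∈ comp H A v₀ ∧ Full H r N y := by
  classical
  obtain ⟨e1, he1, hxe1⟩ := hex
  obtain ⟨he1H, y, hye1, hyA, hyc⟩ := comp_edge he1
  have hyN : y ∉ N := fun h => hyA (hNA h)
  have key : ∀ f, Sum.inr f ∈ comp H A v₀ → x ∈ f → y ∈ f → ∀ e ∈ H, y ∈ e → e ≠ f →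
      e ⊆ insert y N := by
    intro f hf hxf hyf e he hye hef w hw
    have hec := comp_edge_of hyc hyA he hye
    by_cases hwy : w = y
    · exact hwy ▸ mem_insert_self _ _
    refine mem_insert_of_mem (hN e he hec w hw ?_)
    by_contra hwA
    apply hmax
    obtain ⟨hb, hc⟩ := endP_one (hNA hx) hf hxf hyA hyf
    refine ⟨[Sum.inr f, Sum.inl y, Sum.inr e, Sum.inl w], ?_, ?_, rfl⟩
    · refine BPath.append (l₁ := [Sum.inl x, Sum.inr f, Sum.inl y]) (l₂ := [Sum.inr e, Sum.inl w])
        hb ⟨by simp [he, hw], by simp⟩ ?_ ?_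
      · have hxw : x ≠ w := by rintro rfl; exact hwA (hNA hx)
        simp [hxw, hef.symm, Ne.symm hwy]
      · simp [he, hye]
    · intro z hz
      simp only [List.mem_cons, List.not_mem_nil, or_false] at hz
      rcases hz with rfl | rfl | rfl | rfl
      · exact hf
      · exact hyc
      · exact hec
      · exact comp_vert_of hec hwA hw
  have hyW : y ∈ W := hsub _ he1H hye1
  have hdeg := hS {y} (by simpa using hyW) (by simp; omega)
  rw [card_singleton, one_mul] at hdeg
  have hfil : H.filter (fun e => ¬ Disjoint e {y}) = H.filter (fun e => y ∈ e) := by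
    ext e; simp
  rw [hfil] at hdeg
  have hstar : ∀ M : Finset V, y ∉ M → #((powersetCard (r - 1) M).image (insert y)) =
      (#M).choose (r - 1) := by
    intro M hM
    rw [card_image_of_injOn, card_powersetCard]
    intro s hs t ht hst
    have hs' : y ∉ s := fun h => hM ((mem_powersetCard.1 hs).1 h)
    have ht' : y ∉ t := fun h => hM ((mem_powersetCard.1 ht).1 h)
    rw [← erase_insert hs', ← erase_insert ht']
    exact congrArg (fun q => q.erase y) hst
  have hin : ∀ e ∈ H, y ∈ e → ∀ M : Finset V, e ⊆ insert y M →
      e ∈ (powersetCard (r - 1) M).image (insert y) := by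
    intro e he hye M heM
    refine mem_image.2 ⟨e.erase y, mem_powersetCard.2 ⟨?_, ?_⟩, insert_erase hye⟩
    · intro w hw
      obtain ⟨h1, h2⟩ := mem_erase.1 hw
      exact (mem_insert.1 (heM h2)).resolve_left h1
    · rw [card_erase_of_mem hye, hcard e he]
  -- two hyperedges through `x` and `y` are needed, since `key` says nothing about `f` itself
  obtain ⟨e2, he2, hye2, hxe2, he21⟩ : ∃ e ∈ H, y ∈ e ∧ x ∈ e ∧ e ≠ e1 := by
    by_contra hcon
    push Not at hcon
    have hs : H.filter (fun e => y ∈ e) ⊆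
        insert e1 ((powersetCard (r - 1) (N.erase x)).image (insert y)) := by
      intro e he
      obtain ⟨he, hye⟩ := mem_filter.1 he
      by_cases h : e = e1
      · exact h ▸ mem_insert_self _ _
      refine mem_insert_of_mem (hin e he hye _ ?_)
      intro w hw
      rcases mem_insert.1 (key e1 he1 hxe1 hye1 e he hye h hw) with h' | h'
      · exact h' ▸ mem_insert_self _ _
      · refine mem_insert_of_mem (mem_erase.2 ⟨?_, h'⟩)
        rintro rfl
        exact h (hcon e he hye hw)
    have h1 := card_le_card hs
    have h2 := card_insert_le e1 ((powersetCard (r - 1) (N.erase x)).image (insert y))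
    rw [hstar _ (fun h => hyN (mem_of_mem_erase h)), card_erase_of_mem hx, hNk] at h2
    have h3 := choose_gap (k := k) (s := r - 1) (by omega) (by omega)
    omega
  have hall : ∀ e ∈ H, y ∈ e → e ⊆ insert y N := by
    intro e he hye
    by_cases h : e = e1
    · subst h
      exact key e2 (comp_edge_of hyc hyA he2 hye2) hxe2 hye2 e he hye (Ne.symm he21)
    · exact key e1 he1 hxe1 hye1 e he hye h
  have heq : H.filter (fun e => y ∈ e) = (powersetCard (r - 1) N).image (insert y) := by
    refine eq_of_subset_of_card_le ?_ ?_
    · intro e he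
      obtain ⟨he, hye⟩ := mem_filter.1 he
      exact hin e he hye N (hall e he hye)
    · rw [hstar N hyN, hNk]; exact hdeg
  refine ⟨y, hyc, hyN, fun e => ⟨fun h => ⟨hcard e h.1, h.2, hall e h.1 h.2⟩, ?_⟩⟩
  rintro ⟨h1, h2, h3⟩
  have : e ∈ H.filter (fun e => y ∈ e) := by
    rw [heq]
    refine mem_image.2 ⟨e.erase y, mem_powersetCard.2 ⟨?_, ?_⟩, insert_erase h2⟩
    · intro w hw
      obtain ⟨h4, h5⟩ := mem_erase.1 hw
      exact (mem_insert.1 (h3 h5)).resolve_left h4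
    · rw [card_erase_of_mem h2, h1]
  exact ⟨(mem_filter.1 this).1, h2⟩

/-- The structure of a component attached to `A`. The set `N` consists of the vertices of `A` on at
least two hyperedges of the component, together with one vertex for each hyperedge that is the only
one at some vertex of `A`; thus different vertices of `N` can use different hyperedges. Either some
path with at least `k + 2 - |N|` hyperedges leads from `x` into the component, or `|N| = k` and the
component contains a full vertex. -/
lemma local_struct {W : Finset V} {r k : ℕ} {v₀ : V} (hr : 3 ≤ r) (hk : r + 6 ≤ k)
    (hcard : ∀ e ∈ H, e.card = r) (hsub : ∀ e ∈ H, e ⊆ W)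
    (hS : ∀ S ⊆ W, #S ≤ k → #S * k.choose (r - 1) ≤ #(H.filter (fun e => ¬ Disjoint e S)))
    (hv₀ : v₀ ∉ A) (hatt : ∃ e, Sum.inr e ∈ comp H A v₀ ∧ ∃ x ∈ A, x ∈ e) :
    ∃ N ⊆ A, N.Nonempty ∧ (∀ x ∈ N, ∃ e, Sum.inr e ∈ comp H A v₀ ∧ x ∈ e) ∧
      (∀ x ∈ N, ∀ x' ∈ N, x ≠ x' → Conn H A v₀ x x') ∧
      ∀ x ∈ N, (∃ h ≥ 1, k + 2 ≤ #N + h ∧ EndP H A v₀ x h) ∨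
        (#N = k ∧ ∃ y, Sum.inl y ∈ comp H A v₀ ∧ Full H r N y) := by
  classical
  set E : V → Finset (Finset V) := fun x => H.filter (fun e => Sum.inr e ∈ comp H A v₀ ∧ x ∈ e)
    with hE
  have memE : ∀ x e, e ∈ E x ↔ Sum.inr e ∈ comp H A v₀ ∧ x ∈ e := by
    intro x e
    simp only [hE, mem_filter]
    exact ⟨fun h => h.2, fun h => ⟨(comp_edge h.1).1, h⟩⟩
  set Ast := A.filter (fun x => 2 ≤ #(E x)) with hAst
  set Bad := H.filter (fun e => ∃ x ∈ A, E x = {e}) with hBad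
  have hρ : ∀ e, ∃ x, e ∈ Bad → x ∈ A ∧ E x = {e} := by
    intro e
    by_cases he : e ∈ Bad
    · obtain ⟨x, hx⟩ := (mem_filter.1 he).2; exact ⟨x, fun _ => hx⟩
    · exact ⟨v₀, fun h => absurd h he⟩
  choose ρ hρ using hρ
  set N := Ast ∪ Bad.image ρ with hN
  have hNA : N ⊆ A := by
    refine union_subset (filter_subset _ _) ?_
    intro x hx
    obtain ⟨e, he, rfl⟩ := mem_image.1 hx
    exact (hρ e he).1
  have hdich : ∀ w ∈ A, ∀ e, Sum.inr e ∈ comp H A v₀ → w ∈ e → e ∉ Bad → w ∈ Ast := by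
    intro w hw e he hwe heB
    have h1 : e ∈ E w := (memE _ _).2 ⟨he, hwe⟩
    refine mem_filter.2 ⟨hw, ?_⟩
    by_contra hlt
    have h2 : #(E w) = 1 := by have := card_pos.2 ⟨e, h1⟩; omega
    obtain ⟨e', he'⟩ := card_eq_one.1 h2
    rw [he', mem_singleton] at h1
    exact heB (mem_filter.2 ⟨(comp_edge he).1, w, hw, by rw [he', h1]⟩)
  have hNE : ∀ x ∈ N, ∃ e, Sum.inr e ∈ comp H A v₀ ∧ x ∈ e := by
    intro x hx
    rcases mem_union.1 hx with h | h
    · have h1 := (mem_filter.1 h).2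
      obtain ⟨e, he⟩ := card_pos.1 (show 0 < #(E x) by omega)
      exact ⟨e, (memE _ _).1 he⟩
    · obtain ⟨e, he, rfl⟩ := mem_image.1 h
      exact ⟨e, (memE _ _).1 (by rw [(hρ e he).2]; simp)⟩
  have hNn : N.Nonempty := by
    obtain ⟨e, he, x, hx, hxe⟩ := hatt
    by_cases heB : e ∈ Bad
    · exact ⟨ρ e, mem_union_right _ (mem_image_of_mem _ heB)⟩
    · exact ⟨x, mem_union_left _ (hdich x hx e he hxe heB)⟩
  have hdistinct : ∀ x ∈ N, ∀ x' ∈ N, x ≠ x' → ∃ e ∈ E x, ∃ e' ∈ E x', e ≠ e' := by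
    intro x hx x' hx' hxx
    obtain ⟨e0, he0⟩ := hNE x hx
    obtain ⟨e0', he0'⟩ := hNE x' hx'
    rcases mem_union.1 hx with h | h
    · obtain ⟨e, he, hne⟩ := exists_mem_ne (show 1 < #(E x) from (mem_filter.1 h).2) e0'
      exact ⟨e, he, e0', (memE _ _).2 he0', hne⟩
    rcases mem_union.1 hx' with h' | h'
    · obtain ⟨e, he, hne⟩ := exists_mem_ne (show 1 < #(E x') from (mem_filter.1 h').2) e0
      exact ⟨e0, (memE _ _).2 he0, e, he, hne.symm⟩
    obtain ⟨e, he, rfl⟩ := mem_image.1 h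
    obtain ⟨e', he', rfl⟩ := mem_image.1 h'
    refine ⟨e, by rw [(hρ e he).2]; simp, e', by rw [(hρ e' he').2]; simp, ?_⟩
    rintro rfl; exact hxx rfl
  have hcardN : #N = #Ast + #Bad := by
    rw [hN, card_union_of_disjoint, card_image_of_injOn]
    · intro e he e' he' hee
      have h1 := (hρ e he).2
      have h2 := (hρ e' he').2
      rw [hee, h2] at h1
      exact (singleton_injective h1).symm
    · rw [disjoint_left]
      intro x hx hx'
      obtain ⟨e, he, rfl⟩ := mem_image.1 hx'
      have h1 := (mem_filter.1 hx).2
      rw [(hρ e he).2, card_singleton] at h1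
      omega
  refine ⟨N, hNA, hNn, hNE, ?_, ?_⟩
  · intro x hx x' hx' hxx
    obtain ⟨e, he, e', he', hee⟩ := hdistinct x hx x' hx' hxx
    rw [memE] at he he'
    exact conn_of_edges hv₀ (hNA hx) (hNA hx') hxx he.1 he'.1 hee he.2 he'.2
  · intro x hx
    by_contra hcon
    push Not at hcon
    obtain ⟨hc1, hc2⟩ := hcon
    have hNpos := card_pos.2 hNn
    obtain ⟨e0, he0, hxe0⟩ := hNE x hx
    obtain ⟨-, y0, hy0, hy0A, -⟩ := comp_edge he0
    have hP1 : EndP H A v₀ x 1 := ⟨_, (endP_one (hNA hx) he0 hxe0 hy0A hy0).1,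
      (endP_one (hNA hx) he0 hxe0 hy0A hy0).2, rfl⟩
    have hbd : ∀ h, 1 ≤ h → EndP H A v₀ x h → #N + h ≤ k + 1 := by
      intro h hh hP
      by_contra hlt
      exact hc1 h hh (by omega) hP
    set h := Nat.findGreatest (fun h => EndP H A v₀ x h) (k + 1) with hh
    have h1k : 1 ≤ k + 1 := by omega
    have hPh : EndP H A v₀ x h := Nat.findGreatest_spec (P := fun h => EndP H A v₀ x h) h1k hP1
    have hh1 : 1 ≤ h := Nat.le_findGreatest h1k hP1
    have hNh := hbd h hh1 hPh
    have hmax : ¬ EndP H A v₀ x (h + 1) := by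
      intro hP
      have h2 := hbd (h + 1) (by omega) hP
      have h3 : h + 1 ≤ h := Nat.le_findGreatest (P := fun h => EndP H A v₀ x h) (by omega) hP
      omega
    obtain ⟨l, hl1, hl2, hl3⟩ := hPh
    obtain ⟨t, n₀, ht, hth, hn, htn, hq1, hq2⟩ := end_count hcard hsub hS hv₀ (hNA hx) hh1
      (by omega) hl1 hl2 hl3 hmax Bad Ast (fun e he hec heB w hwe hwA => hdich w hwA e hec hwe heB)
    have her : #(Ast.erase x) ≤ #N - 1 := by
      rw [hcardN]
      by_cases hxA : x ∈ Ast
      · rw [card_erase_of_mem hxA]; omega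
      · rw [erase_eq_of_notMem hxA]
        have h1 : x ∈ Bad.image ρ := (mem_union.1 hx).resolve_left hxA
        obtain ⟨e, he, -⟩ := mem_image.1 h1
        have := card_pos.2 ⟨e, he⟩
        omega
    have hq1' : k.choose (r - 1) ≤ (#N - 1 + t).choose (r - 1) + h + #Bad :=
      hq1.trans (by gcongr)
    obtain ⟨h4, h5, h6⟩ := num_core (s := r - 1) (k := k) (m := #N) (a := #Ast) (b := #Bad) (h := h)
      (t := t) (n₀ := n₀) (by omega) (by omega) hcardN hNpos ht hth hNh hn htn hq1'
      (by rw [show r - 1 + 1 = r by omega]; exact hq2)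
    have hB0 : Bad = ∅ := card_eq_zero.1 h5
    have hNe : N = Ast := by rw [hN, hB0]; simp
    rw [h4] at hmax
    obtain ⟨y, hy1, hy2⟩ := full_of_short hr hk hcard hsub hS hNA h6 hx (fun e he hec w hwe hwA => by
      rw [hNe]; exact hdich w hwA e hec hwe (by rw [hB0]; simp)) (hNE x hx) hmax
    exact hc2 h6 y hy1 hy2

end

/-! ### Joining paths through several components -/

section

variable {V : Type*} {H : Finset (Finset V)} {A : Finset V}

/-- A component with no hyperedge meeting `A` contains a path with at least `k` hyperedges starting
at `v`: apply the local structure to the components left after deleting `v` as well. -/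
lemma long_path_of_unattached [DecidableEq V] {W : Finset V} {r k : ℕ} {v : V} (hr : 3 ≤ r)
    (hk : r + 6 ≤ k) (hcard : ∀ e ∈ H, e.card = r) (hsub : ∀ e ∈ H, e ⊆ W)
    (hS : ∀ S ⊆ W, #S ≤ k → #S * k.choose (r - 1) ≤ #(H.filter (fun e => ¬ Disjoint e S)))
    (hvW : v ∈ W) (hvA : v ∉ A) (hun : ∀ e, Sum.inr e ∈ comp H A v → ∀ x ∈ e, x ∉ A) :
    ∃ l, BPath H (Sum.inl v :: l) ∧ (∀ z ∈ Sum.inl v :: l, z ∈ comp H A v) ∧ 2 * k ≤ l.length := by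
  have hdeg := hS {v} (by simpa using hvW) (by simp; omega)
  have hpos : 0 < k.choose (r - 1) := Nat.choose_pos (by omega)
  rw [card_singleton, one_mul] at hdeg
  obtain ⟨e, he⟩ := card_pos.1 (hpos.trans_le hdeg)
  obtain ⟨heH, hve⟩ := mem_filter.1 he
  rw [disjoint_singleton_right, not_not] at hve
  have hec := comp_edge_of (comp_self v) hvA heH hve
  obtain ⟨z, hze, hzv⟩ := exists_mem_ne (show 1 < #e by rw [hcard e heH]; omega) v
  have hzA := hun e hec z hze
  have hzA' : z ∉ insert v A := by simp [hzv, hzA]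
  have hzc := comp_vert_of hec hzA hze
  have hsubc := comp_mono (H := H) (subset_insert v A) hzc
  obtain ⟨N, hNA, hNn, hNe, -, hN⟩ := local_struct hr hk hcard hsub hS hzA'
    ⟨e, comp_edge_of (comp_self z) hzA' heH hze, v, mem_insert_self _ _, hve⟩
  have hNv : ∀ x ∈ N, x = v := by
    intro x hx
    refine (mem_insert.1 (hNA hx)).resolve_right fun hxA => ?_
    obtain ⟨f, hf, hxf⟩ := hNe x hx
    exact hun f (hsubc hf) x hxf hxA
  have hNc : #N ≤ 1 := card_le_one.2 fun a ha b hb => (hNv a ha).trans (hNv b hb).symm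
  obtain ⟨x, hx⟩ := hNn
  rcases hN x hx with ⟨h, -, h2, l, hl1, hl2, hl3⟩ | ⟨h, -⟩
  · rw [hNv x hx] at hl1
    refine ⟨l, hl1, ?_, by omega⟩
    intro q hq
    rcases List.mem_cons.1 hq with rfl | hq
    · exact comp_self v
    · exact hsubc (hl2 q hq)
  · omega

/-- Vertices `x`, `xs` are linked in order through the pairwise distinct components of `cs`. -/
lemma link (xs : List V) : ∀ (x : V) (cs : List V), (x :: xs).Nodup → (∀ y ∈ x :: xs, y ∈ A) →
    cs.length = xs.length → (∀ c ∈ cs, c ∉ A) →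
    cs.Pairwise (fun c c' => Sum.inl c' ∉ comp H A c) →
    (∀ c ∈ cs, ∀ y ∈ x :: xs, ∀ y' ∈ x :: xs, y ≠ y' → Conn H A c y y') →
    ∃ p : List (V ⊕ Finset V), BPath H p ∧ p.head? = some (Sum.inl x) ∧
      (∃ y ∈ x :: xs, p.getLast? = some (Sum.inl y)) ∧ 4 * xs.length + 1 ≤ p.length ∧
      ∀ z ∈ p, (∃ y ∈ x :: xs, z = Sum.inl y) ∨ ∃ c ∈ cs, z ∈ comp H A c := by
  induction xs with
  | nil =>
    intro x cs _ _ _ _ _ _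
    exact ⟨[Sum.inl x], ⟨by simp, by simp⟩, rfl, ⟨x, by simp, rfl⟩, by simp, by simp⟩
  | cons x' xs ih =>
    intro x cs hnd hA hlen hcA hpw hconn
    obtain _ | ⟨c, cs⟩ := cs
    · simp at hlen
    rw [List.nodup_cons] at hnd
    rw [List.pairwise_cons] at hpw
    obtain ⟨p, hp, hph, ⟨y, hy, hpl⟩, hplen, hpm⟩ := ih x' cs hnd.2
      (fun y hy => hA y (List.mem_cons_of_mem _ hy)) (by simpa using hlen)
      (fun c hc => hcA c (List.mem_cons_of_mem _ hc)) hpw.2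
      (fun c hc y hy y' hy' => hconn c (List.mem_cons_of_mem _ hc) y (List.mem_cons_of_mem _ hy) y'
        (List.mem_cons_of_mem _ hy'))
    obtain ⟨l, hl1, hl2, hl3⟩ := hconn c (by simp) x (by simp) x' (by simp)
      (by rintro rfl; exact hnd.1 (by simp))
    rw [← List.cons_append] at hl1
    have hcA' := hcA c (by simp)
    have hxA : x ∈ A := hA x (by simp)
    refine ⟨(Sum.inl x :: l) ++ p, ?_, rfl, ⟨y, List.mem_cons_of_mem _ hy, ?_⟩, ?_, ?_⟩
    · refine BPath.append hl1.left hp ?_ ?_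
      · intro z hz hzp
        rcases List.mem_cons.1 hz with rfl | hz
        · rcases hpm _ hzp with ⟨y, hy, h⟩ | ⟨c', hc', h⟩
          · cases h; exact hnd.1 hy
          · exact comp_notMem (hcA c' (List.mem_cons_of_mem _ hc')) h hxA
        · rcases hpm _ hzp with ⟨y, hy, rfl⟩ | ⟨c', hc', h⟩
          · exact comp_notMem hcA' (hl2 _ hz) (hA y (List.mem_cons_of_mem _ hy))
          · exact comp_disj (hpw.1 c' hc') (hl2 _ hz) h
      · intro a ha b hb
        rw [hph] at hb
        exact (List.isChain_append.1 hl1.1).2.2 a ha b hb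
    · rw [List.getLast?_append, hpl]; rfl
    · simp; omega
    · intro z hz
      rw [List.cons_append] at hz
      rcases List.mem_cons.1 hz with rfl | hz
      · exact Or.inl ⟨x, by simp, rfl⟩
      rcases List.mem_append.1 hz with hz | hz
      · exact Or.inr ⟨c, by simp, hl2 z hz⟩
      · rcases hpm z hz with ⟨y, hy, h⟩ | ⟨c', hc', h⟩
        · exact Or.inl ⟨y, List.mem_cons_of_mem _ hy, h⟩
        · exact Or.inr ⟨c', List.mem_cons_of_mem _ hc', h⟩

/-- If `N` can be linked through the components of `cs`, and paths lead from `N` into two further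
components `c` and `d`, everything is assembled to one path with at least
`h + h₀ + 2 (|N| - 1)` hyperedges. -/
lemma assembly [DecidableEq V] {N : Finset V} {x c d : V} {cs : List V} {h h₀ : ℕ} (hNA : N ⊆ A)
    (hx : x ∈ N) (hcs : cs.length + 1 = #N) (hcA : ∀ a ∈ c :: d :: cs, a ∉ A)
    (hpw : (c :: d :: cs).Pairwise (fun a b => Sum.inl b ∉ comp H A a))
    (hc : EndP H A c x h) (hd : ∀ y ∈ N, ∃ h' ≥ h₀, EndP H A d y h')
    (hconn : ∀ a ∈ cs, ∀ y ∈ N, ∀ y' ∈ N, y ≠ y' → Conn H A a y y') :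
    ∃ p : List (V ⊕ Finset V), BPath H p ∧ (∃ y, p[0]? = some (Sum.inl y)) ∧
      2 * h + 2 * h₀ + 4 * (#N - 1) + 1 ≤ p.length ∧
      ∀ z ∈ p, (∃ y ∈ N, z = Sum.inl y) ∨ ∃ a ∈ c :: d :: cs, z ∈ comp H A a := by
  have hmem : ∀ y, y ∈ x :: (N.erase x).toList ↔ y ∈ N := by
    intro y
    rw [List.mem_cons, mem_toList, mem_erase]
    constructor
    · rintro (rfl | h)
      · exact hx
      · exact h.2
    · intro hy
      by_cases hyx : y = x
      · exact Or.inl hyx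
      · exact Or.inr ⟨hyx, hy⟩
  have hxl : (N.erase x).toList.length = #N - 1 := by rw [length_toList, card_erase_of_mem hx]
  rw [List.pairwise_cons, List.pairwise_cons] at hpw
  obtain ⟨hpc, hpd, hpw⟩ := hpw
  obtain ⟨p, hp, hph, ⟨y, hy, hpl⟩, hplen, hpm⟩ := link (H := H) (A := A) (N.erase x).toList x cs
    (List.nodup_cons.2 ⟨by simp, nodup_toList _⟩) (fun y hy => hNA ((hmem y).1 hy))
    (by omega) (fun a ha => hcA a (by simp [ha])) hpw
    (fun a ha y hy y' hy' => hconn a ha y ((hmem y).1 hy) y' ((hmem y').1 hy'))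
  have hyN := (hmem y).1 hy
  obtain ⟨l, hl1, hl2, hl3⟩ := hc
  obtain ⟨h', hh', l', hl1', hl2', hl3'⟩ := hd y hyN
  have hcA' := hcA c (by simp)
  have hdA' := hcA d (by simp)
  have hpm' : ∀ z ∈ p, (∃ y ∈ N, z = Sum.inl y) ∨ ∃ a ∈ cs, z ∈ comp H A a := by
    intro z hz
    rcases hpm z hz with ⟨w, hw, h⟩ | h
    · exact Or.inl ⟨w, (hmem w).1 hw, h⟩
    · exact Or.inr h
  have hpl' : BPath H (p ++ l') := by
    refine BPath.append hp (BPath.right (l₁ := [Sum.inl y]) hl1') ?_ ?_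
    · intro z hz hz'
      rcases hpm' z hz with ⟨w, hw, rfl⟩ | ⟨a, ha, h⟩
      · exact comp_notMem hdA' (hl2' _ hz') (hNA hw)
      · exact comp_disj (hpd a ha) (hl2' _ hz') h
    · rw [hpl]
      exact (List.isChain_append.1 (show ([Sum.inl y] ++ l').IsChain (incG H ∅).Adj from hl1'.1)).2.2
  have hall : BPath H (l.reverse ++ (p ++ l')) := by
    refine BPath.append (BPath.right (l₁ := [Sum.inl x]) hl1).reverse hpl' ?_ ?_
    · intro z hz hz'
      rw [List.mem_reverse] at hz
      rcases List.mem_append.1 hz' with hz' | hz'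
      · rcases hpm' z hz' with ⟨w, hw, rfl⟩ | ⟨a, ha, h⟩
        · exact comp_notMem hcA' (hl2 _ hz) (hNA hw)
        · exact comp_disj (hpc a (List.mem_cons_of_mem _ ha)) (hl2 _ hz) h
      · exact comp_disj (hpc d (by simp)) (hl2 _ hz) (hl2' _ hz')
    · intro a ha b hb
      rw [List.getLast?_reverse] at ha
      rw [List.head?_append, hph] at hb
      simp at hb
      subst hb
      exact ((List.isChain_append.1
        (show ([Sum.inl x] ++ l).IsChain (incG H ∅).Adj from hl1.1)).2.2 _ (by simp) a ha).symm
  refine ⟨_, hall, ?_, ?_, ?_⟩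
  · obtain ⟨w, hw⟩ := (hl1.parity ⟨x, rfl⟩ h).1 (by simp [hl3])
    refine ⟨w, ?_⟩
    rcases Nat.eq_zero_or_pos h with h0 | h0
    · have : l = [] := by rw [← List.length_eq_zero_iff]; omega
      subst this
      rw [h0] at hw
      simp at hw
      subst hw
      rw [List.reverse_nil, List.nil_append, ← List.head?_eq_getElem?, List.head?_append, hph]
      rfl
    · rw [show 2 * h = (2 * h - 1) + 1 by omega, List.getElem?_cons_succ] at hw
      rw [← List.head?_eq_getElem?, List.head?_append, List.head?_reverse, List.getLast?_eq_getElem?,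
        hl3, hw]
      rfl
  · simp only [List.length_append, List.length_reverse]
    omega
  · intro z hz
    rcases List.mem_append.1 hz with hz | hz
    · exact Or.inr ⟨c, by simp, hl2 z (List.mem_reverse.1 hz)⟩
    rcases List.mem_append.1 hz with hz | hz
    · rcases hpm' z hz with h | ⟨a, ha, h⟩
      · exact Or.inl h
      · exact Or.inr ⟨a, by simp [ha], h⟩
    · exact Or.inr ⟨d, by simp, hl2' z hz⟩

end

/-! ### Deleting vertices to create many components -/

section

variable {V : Type*} {H : Finset (Finset V)} {A : Finset V}

open Classical in
/-- The vertices of `W` in the component of `u`. -/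
noncomputable def verts (H : Finset (Finset V)) (W A : Finset V) (u : V) : Finset V :=
  W.filter (fun w => Sum.inl w ∈ comp H A u)

/-- The vertex sets of the components of `H` after deletion of `A`, restricted to `W`. -/
noncomputable def classes [DecidableEq V] (H : Finset (Finset V)) (W A : Finset V) : Finset (Finset V) :=
  (W \ A).image (verts H W A)

/-- The component size that suffices to find a path with a given number of hyperedges when at most
`F` components arise in each step. -/
def growth (F r : ℕ) : ℕ → ℕ
  | 0 => 1
  | j + 1 => F * growth F r j + r

/-- If the vertices of a hyperedge `e` of a component are deleted, every component that remains is
attached to `e`. -/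
lemma sub_attached [DecidableEq V] {v u : V} {e : Finset V}
    (he : Sum.inr e ∈ comp H A v) (hu : Sum.inl u ∈ comp H A v) (hue : u ∉ A ∪ e) :
    ∃ w ∈ e, w ∉ A ∧ ∃ f, Sum.inr f ∈ comp H (A ∪ e) u ∧ w ∈ f := by
  by_contra hcon
  push Not at hcon
  have hsub : ∀ z ∈ comp H A u, z ∈ comp H (A ∪ e) u ∧ ∀ w, z = Sum.inl w → w ∉ A ∪ e := by
    refine comp_induct ⟨comp_self u, by rintro w h; cases h; exact hue⟩ ?_
    rintro (a | a) (b | b) ⟨hP, hP'⟩ hab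
    · exact absurd hab (incG_ll _ _ _ _)
    · exact ⟨comp_edge_of hP (hP' a rfl) hab.1 hab.2.1, by rintro w h; cases h⟩
    · have hb : b ∉ A ∪ e := by
        intro h
        rcases mem_union.1 h with h | h
        · exact hab.2.2 h
        · exact hcon b h hab.2.2 a hP hab.2.1
      exact ⟨comp_vert_of hP hb hab.2.1, by rintro w h; cases h; exact hb⟩
    · exact absurd hab (incG_rr _ _ _ _)
  have h1 : Sum.inr e ∈ comp H A u :=
    SimpleGraph.Reachable.trans (SimpleGraph.Reachable.symm hu) he
  obtain ⟨-, w, hwe, hw, -⟩ := comp_edge (hsub _ h1).1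
  exact hw (mem_union_right _ hwe)

/-- If deleting any bounded superset of `A₀` leaves fewer than `F` components, then a large component
contains a long path starting at a prescribed neighbour `x ∈ A`. Delete an entrance hyperedge `e` at
`x`, pass to a large remaining component, and enter that one from a vertex of `e`. -/
lemma path_of_large [DecidableEq V] {W A₀ : Finset V} {r F B : ℕ} (hcard : ∀ e ∈ H, e.card = r)
    (hF : ∀ A', A₀ ⊆ A' → #A' ≤ B → #(classes H W A') < F) :
    ∀ j (A : Finset V) (v x : V) (e : Finset V), A₀ ⊆ A → #A + r * j ≤ B → v ∉ A → x ∈ A → x ∈ e →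
      Sum.inr e ∈ comp H A v → growth F r j ≤ #(verts H W A v) → EndP H A v x j := by
  classical
  intro j
  induction j with
  | zero =>
    intro A v x e _ _ _ _ _ _ _
    exact ⟨[], ⟨by simp, by simp⟩, by simp, rfl⟩
  | succ j ih =>
    intro A v x e hA hB hv hx hxe he hg
    have heH := (comp_edge he).1
    have hec := hcard e heH
    have hcA' : #(A ∪ e) ≤ #A + r := (card_union_le _ _).trans (by omega)
    have hB' : #(A ∪ e) + r * j ≤ B := by rw [Nat.mul_succ] at hB; omega
    have hAA' : A₀ ⊆ A ∪ e := hA.trans subset_union_left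
    have hcl := hF (A ∪ e) hAA' (by omega)
    set S := verts H W A v \ e with hS
    have hS1 : F * growth F r j ≤ #S := by
      have := le_card_sdiff e (verts H W A v)
      rw [← hS] at this
      simp only [growth] at hg
      omega
    have hgp : 1 ≤ growth F r j := by
      cases j with
      | zero => exact le_rfl
      | succ j =>
        have : 0 < growth F r (j + 1) ∨ growth F r (j + 1) = 0 := by omega
        rcases this with h | h
        · exact h
        · have hr0 : r = 0 := by simp only [growth] at h; omega
          rw [hr0] at hec
          rw [card_eq_zero.1 hec] at hxe
          simp at hxe
    have hmaps : ∀ u ∈ S, verts H W (A ∪ e) u ∈ classes H W (A ∪ e) := by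
      intro u hu
      obtain ⟨hu1, hu2⟩ := mem_sdiff.1 hu
      obtain ⟨hu3, hu4⟩ := mem_filter.1 hu1
      refine mem_image_of_mem _ (mem_sdiff.2 ⟨hu3, ?_⟩)
      intro h
      rcases mem_union.1 h with h | h
      · exact comp_notMem hv hu4 h
      · exact hu2 h
    have hlt : #(classes H W (A ∪ e)) * (growth F r j - 1) < #S := by
      have h1 : #(classes H W (A ∪ e)) * (growth F r j - 1) ≤ F * (growth F r j - 1) :=
        Nat.mul_le_mul_right _ hcl.le
      have h2 : F * (growth F r j - 1) < F * growth F r j :=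
        Nat.mul_lt_mul_of_pos_left (by omega) (by omega)
      omega
    obtain ⟨C, hC, hCS⟩ := exists_lt_card_fiber_of_mul_lt_card_of_maps_to hmaps hlt
    have hne : 0 < #(S.filter (fun u => verts H W (A ∪ e) u = C)) := by omega
    obtain ⟨u, hu⟩ := card_pos.1 hne
    obtain ⟨huS, huC⟩ := mem_filter.1 hu
    obtain ⟨hu1, hue⟩ := mem_sdiff.1 huS
    obtain ⟨huW, huc⟩ := mem_filter.1 hu1
    have huA' : u ∉ A ∪ e := by
      intro h
      rcases mem_union.1 h with h | h
      · exact comp_notMem hv huc h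
      · exact hue h
    have hbig : growth F r j ≤ #(verts H W (A ∪ e) u) := by
      have : S.filter (fun u => verts H W (A ∪ e) u = C) ⊆ verts H W (A ∪ e) u := by
        intro w hw
        obtain ⟨hwS, hwC⟩ := mem_filter.1 hw
        rw [huC, ← hwC]
        exact mem_filter.2 ⟨(mem_filter.1 (mem_sdiff.1 hwS).1).1, comp_self w⟩
      have := card_le_card this
      omega
    obtain ⟨w, hwe, hwA, f, hf, hwf⟩ := sub_attached he huc huA'
    obtain ⟨l, hl1, hl2, hl3⟩ := ih (A ∪ e) u w f hAA' hB' huA' (mem_union_right _ hwe) hwf hf hbig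
    have hsub : comp H (A ∪ e) u ⊆ comp H A v := comp_mono subset_union_left huc
    have hwc := comp_vert_of he hwA hwe
    have hxw : x ≠ w := by rintro rfl; exact hwA hx
    refine ⟨Sum.inr e :: Sum.inl w :: l, ?_, ?_, by simp [hl3]; omega⟩
    · refine BPath.append (l₁ := [Sum.inl x, Sum.inr e]) (l₂ := Sum.inl w :: l)
        ⟨by simp [heH, hxe], by simp⟩ hl1 ?_ ?_
      · intro z hz hz'
        simp only [List.mem_cons, List.not_mem_nil, or_false] at hz
        rcases hz with rfl | rfl
        · rcases List.mem_cons.1 hz' with h | h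
          · exact hxw (Sum.inl.inj h)
          · exact comp_notMem huA' (hl2 _ h) (mem_union_left _ hx)
        · rcases List.mem_cons.1 hz' with h | h
          · cases h
          · obtain ⟨-, y, hye, hy, -⟩ := comp_edge (hl2 _ h)
            exact hy (mem_union_right _ hye)
      · simp [heH, hwe]
    · intro z hz
      rcases List.mem_cons.1 hz with rfl | hz
      · exact he
      rcases List.mem_cons.1 hz with rfl | hz
      · exact hwc
      · exact hsub (hl2 _ hz)

/-- Deleting boundedly many vertices leaves many components. -/
lemma many_classes [DecidableEq V] {W A₀ : Finset V} {r F J : ℕ} (hcard : ∀ e ∈ H, e.card = r)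
    (hatt : ∀ v ∈ W, v ∉ A₀ → ∃ e, Sum.inr e ∈ comp H A₀ v ∧ ∃ x ∈ A₀, x ∈ e)
    (hno : ∀ p : List (V ⊕ Finset V), BPath H p → (∃ x, p[0]? = some (Sum.inl x)) →
      p.length < 2 * J + 1)
    (hW : #A₀ + F * growth F r J < #W) :
    ∃ A, A₀ ⊆ A ∧ #A ≤ #A₀ + r * J ∧ F ≤ #(classes H W A) := by
  classical
  by_contra hcon
  push Not at hcon
  have hlt : #(classes H W A₀) * growth F r J < #(W \ A₀) := by
    have h1 := le_card_sdiff A₀ W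
    have h2 : #(classes H W A₀) * growth F r J ≤ F * growth F r J :=
      Nat.mul_le_mul_right _ (hcon A₀ (Subset.refl _) (by omega)).le
    omega
  obtain ⟨C, hC, hCS⟩ := exists_lt_card_fiber_of_mul_lt_card_of_maps_to
    (fun u hu => mem_image_of_mem (verts H W A₀) hu) hlt
  obtain ⟨u, hu⟩ := card_pos.1 ((Nat.zero_le _).trans_lt hCS)
  obtain ⟨huS, huC⟩ := mem_filter.1 hu
  obtain ⟨huW, huA⟩ := mem_sdiff.1 huS
  have hbig : growth F r J ≤ #(verts H W A₀ u) := by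
    have : (W \ A₀).filter (fun u => verts H W A₀ u = C) ⊆ verts H W A₀ u := by
      intro w hw
      obtain ⟨hwS, hwC⟩ := mem_filter.1 hw
      rw [huC, ← hwC]
      exact mem_filter.2 ⟨(mem_sdiff.1 hwS).1, comp_self w⟩
    have := card_le_card this
    omega
  obtain ⟨e, he, x, hx, hxe⟩ := hatt u huW huA
  obtain ⟨l, hl1, hl2, hl3⟩ := path_of_large hcard hcon J A₀ u x e (Subset.refl _) le_rfl huA hx
    hxe he hbig
  have := hno _ hl1 ⟨x, rfl⟩
  simp [hl3] at this

/-- Representatives of the components left after deleting `A`. -/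
lemma exists_reps (H : Finset (Finset V)) [DecidableEq V] (W A : Finset V) :
    ∃ T ⊆ W \ A, #T = #(classes H W A) ∧ ∀ u ∈ T, ∀ u' ∈ T, u ≠ u' → Sum.inl u' ∉ comp H A u := by
  classical
  obtain ⟨T, hT, hinj, him⟩ := exists_subset_injOn_image_eq_of_surjOn ((W \ A : Finset V) : Set V)
    (classes H W A) (f := verts H W A) (by unfold classes; rw [coe_image]; exact Set.surjOn_image _ _)
  replace hT : T ⊆ W \ A := by exact_mod_cast hT
  refine ⟨T, hT, ?_, ?_⟩
  · rw [← him, card_image_of_injOn hinj]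
  · intro u hu u' hu' hne hc
    apply hne
    refine hinj hu hu' ?_
    ext w
    simp only [verts, mem_filter]
    refine and_congr_right fun _ => ⟨fun h => ?_, fun h => ?_⟩
    · exact SimpleGraph.Reachable.trans (SimpleGraph.Reachable.symm hc) h
    · exact SimpleGraph.Reachable.trans hc h

end

/-! ### The core and its full vertices -/

section

variable {V : Type*} {H : Finset (Finset V)} {A : Finset V}

/-- If many components remain after deleting `A`, all attached to `A`, and there is no path with
`2k + 1` hyperedges, then some `k`-set `K` has `k + 1` full vertices. -/
lemma exists_full_set [DecidableEq V] {W : Finset V} {r k M : ℕ} (hr : 3 ≤ r) (hk : r + 6 ≤ k)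
    (hcard : ∀ e ∈ H, e.card = r) (hsub : ∀ e ∈ H, e ⊆ W)
    (hS : ∀ S ⊆ W, #S ≤ k → #S * k.choose (r - 1) ≤ #(H.filter (fun e => ¬ Disjoint e S)))
    (hno : ∀ p : List (V ⊕ Finset V), BPath H p → (∃ x, p[0]? = some (Sum.inl x)) →
      p.length < 4 * k + 3)
    (hatt : ∀ v ∈ W, v ∉ A → ∃ e, Sum.inr e ∈ comp H A v ∧ ∃ x ∈ A, x ∈ e)
    (hA : #A ≤ M) (hcl : 2 ^ M * (k + 3) ≤ #(classes H W A)) :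
    ∃ K Y : Finset V, #K = k ∧ #Y = k + 1 ∧ ∀ y ∈ Y, Full H r K y := by
  classical
  obtain ⟨T, hTW, hTc, hT⟩ := exists_reps H W A
  have hloc : ∀ u, ∃ N : Finset V, u ∈ T → N ⊆ A ∧ N.Nonempty ∧
      (∀ x ∈ N, ∃ e, Sum.inr e ∈ comp H A u ∧ x ∈ e) ∧
      (∀ x ∈ N, ∀ x' ∈ N, x ≠ x' → Conn H A u x x') ∧
      ∀ x ∈ N, (∃ h ≥ 1, k + 2 ≤ #N + h ∧ EndP H A u x h) ∨
        (#N = k ∧ ∃ y, Sum.inl y ∈ comp H A u ∧ Full H r N y) := by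
    intro u
    by_cases hu : u ∈ T
    · obtain ⟨h1, h2⟩ := mem_sdiff.1 (hTW hu)
      obtain ⟨N, h⟩ := local_struct hr hk hcard hsub hS h2 (hatt u h1 h2)
      exact ⟨N, fun _ => h⟩
    · exact ⟨∅, fun h => absurd h hu⟩
  choose Nf hNf using hloc
  -- pigeonhole on the set `N ⊆ A` belonging to a component
  have hlt : #A.powerset * (k + 2) < #T := by
    rw [card_powerset, hTc]
    have h1 : 2 ^ #A * (k + 2) ≤ 2 ^ M * (k + 2) :=
      Nat.mul_le_mul_right _ (Nat.pow_le_pow_right (by omega) hA)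
    have h2 : 0 < 2 ^ M := by positivity
    have h3 : 2 ^ M * (k + 3) = 2 ^ M * (k + 2) + 2 ^ M := by ring
    omega
  obtain ⟨N, -, hN⟩ := exists_lt_card_fiber_of_mul_lt_card_of_maps_to
    (fun u hu => mem_powerset.2 (hNf u hu).1) hlt
  set T' := T.filter (fun u => Nf u = N) with hT'
  have hT'T : T' ⊆ T := filter_subset _ _
  have hTA : ∀ u ∈ T', u ∉ A := fun u hu => (mem_sdiff.1 (hTW (hT'T hu))).2
  have hNT : ∀ u ∈ T', N ⊆ A ∧ N.Nonempty ∧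
      (∀ x ∈ N, ∃ e, Sum.inr e ∈ comp H A u ∧ x ∈ e) ∧
      (∀ x ∈ N, ∀ x' ∈ N, x ≠ x' → Conn H A u x x') ∧
      ∀ x ∈ N, (∃ h ≥ 1, k + 2 ≤ #N + h ∧ EndP H A u x h) ∨
        (#N = k ∧ ∃ y, Sum.inl y ∈ comp H A u ∧ Full H r N y) := by
    intro u hu
    obtain ⟨h1, h2⟩ := mem_filter.1 hu
    have := hNf u h1
    rwa [h2] at this
  -- a long path into one of the components would yield a path with `2k + 1` hyperedges
  have hnofirst : ∀ u ∈ T', ∀ x ∈ N, ¬ ∃ h ≥ 1, k + 2 ≤ #N + h ∧ EndP H A u x h := by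
    rintro u hu x hx ⟨h, hh1, hh2, hP⟩
    have hNpos := card_pos.2 ⟨x, hx⟩
    -- linking `k + 1` vertices suffices, which bounds the number of components needed
    obtain ⟨N', hxN', hN'N, hN'c⟩ := exists_subsuperset_card_eq (s := {x}) (t := N)
      (n := min #N (k + 1)) (by simpa using hx) (by rw [card_singleton]; omega) (by omega)
    have hxN' : x ∈ N' := hxN' (mem_singleton_self x)
    obtain ⟨d, hd⟩ := card_pos.1 (show 0 < #(T'.erase u) by rw [card_erase_of_mem hu]; omega)
    have hdT := mem_of_mem_erase hd
    obtain ⟨C, hC, hCc⟩ := exists_subset_card_eq (s := (T'.erase u).erase d) (n := #N' - 1)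
      (by rw [card_erase_of_mem hd, card_erase_of_mem hu]; omega)
    have hCm : ∀ c ∈ C, c ≠ d ∧ c ≠ u ∧ c ∈ T' := fun c hc => by
      have := hC hc
      rw [mem_erase, mem_erase] at this; exact this
    have hnd : (u :: d :: C.toList).Nodup := by
      rw [List.nodup_cons, List.nodup_cons]
      refine ⟨?_, ?_, nodup_toList _⟩
      · rw [List.mem_cons, mem_toList]
        rintro (h | h)
        · exact (mem_erase.1 hd).1 h.symm
        · exact (hCm u h).2.1 rfl
      · rw [mem_toList]; exact fun h => (hCm d h).1 rfl
    have hmemT : ∀ a ∈ u :: d :: C.toList, a ∈ T' := by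
      intro a ha
      rw [List.mem_cons, List.mem_cons, mem_toList] at ha
      rcases ha with rfl | rfl | ha
      · exact hu
      · exact hdT
      · exact (hCm a ha).2.2
    obtain ⟨p, hp1, hp2, hp3, -⟩ := assembly (H := H) (A := A) (N := N') (x := x) (c := u) (d := d)
      (cs := C.toList) (h := h) (h₀ := if #N < k then k + 2 - #N else 1) (hN'N.trans (hNT u hu).1)
      hxN' (by rw [length_toList]; omega) (fun a ha => hTA a (hmemT a ha))
      (hnd.pairwise_of_forall_ne fun a ha b hb hab =>
        hT a (hT'T (hmemT a ha)) b (hT'T (hmemT b hb)) hab) hP (by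
        intro y hy
        rcases (hNT d hdT).2.2.2.2 y (hN'N hy) with ⟨h', h1, h2, h3⟩ | ⟨h1, -⟩
        · refine ⟨h', ?_, h3⟩
          split_ifs <;> omega
        · refine ⟨1, by rw [if_neg (by omega)], ?_⟩
          obtain ⟨e, he, hye⟩ := (hNT d hdT).2.2.1 y (hN'N hy)
          obtain ⟨-, w, hwe, hwA, -⟩ := comp_edge he
          exact ⟨_, (endP_one ((hNT d hdT).1 (hN'N hy)) he hye hwA hwe).1,
            (endP_one ((hNT d hdT).1 (hN'N hy)) he hye hwA hwe).2, rfl⟩) (by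
        intro a ha y hy y' hy' hyy
        exact (hNT a (hCm a (mem_toList.1 ha)).2.2).2.2.2.1 y (hN'N hy) y' (hN'N hy') hyy)
    have hlen := hno p hp1 hp2
    split_ifs at hp3 <;> omega
  obtain ⟨u₀, hu₀⟩ := card_pos.1 ((Nat.zero_le _).trans_lt hN)
  obtain ⟨x, hx⟩ := (hNT u₀ hu₀).2.1
  have hfull : ∀ u, ∃ y, u ∈ T' → #N = k ∧ Sum.inl y ∈ comp H A u ∧ Full H r N y := by
    intro u
    by_cases hu : u ∈ T'
    · obtain ⟨h, y, hy⟩ := ((hNT u hu).2.2.2.2 x hx).resolve_left (hnofirst u hu x hx)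
      exact ⟨y, fun _ => ⟨h, hy⟩⟩
    · exact ⟨u, fun h => absurd h hu⟩
  choose y hy using hfull
  have hyinj : Set.InjOn y T' := by
    intro u hu u' hu' huu
    by_contra hne
    exact comp_disj (hT u (hT'T hu) u' (hT'T hu') hne) (hy u hu).2.1 (huu ▸ (hy u' hu').2.1)
  obtain ⟨Y, hY, hYc⟩ := exists_subset_card_eq (s := T'.image y) (n := k + 1)
    (by rw [card_image_of_injOn hyinj]; omega)
  refine ⟨N, Y, (hy u₀ hu₀).1, hYc, ?_⟩
  intro z hz
  obtain ⟨u, hu, rfl⟩ := mem_image.1 (hY hz)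
  exact (hy u hu).2.2

end

/-! ### Edges outside the core and the upper bound -/

section

variable {V : Type*} {H : Finset (Finset V)} {A : Finset V}

/-- A full vertex is the only vertex of its component after deletion of the core. -/
lemma full_comp [DecidableEq V] {r : ℕ} {K : Finset V} {y : V} (hy : Full H r K y) {z : V}
    (hz : Sum.inl z ∈ comp H K y) : z = y := by
  have := comp_induct (H := H) (A := K) (v := y)
    (P := fun q => (∀ w, q = Sum.inl w → w = y) ∧ ∀ e, q = Sum.inr e → y ∈ e)
    ⟨by rintro w h; cases h; rfl, by rintro e h; cases h⟩ (by
      rintro (a | a) (b | b) ⟨hP, hP'⟩ hab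
      · exact absurd hab (incG_ll _ _ _ _)
      · refine ⟨fun w h => absurd h (by simp), ?_⟩
        rintro e h; cases h
        rw [← hP a rfl]; exact hab.2.1
      · refine ⟨?_, by rintro w h; cases h⟩
        rintro w h; cases h
        have h1 := ((hy.2 a).1 ⟨hab.1, hP' a rfl⟩).2.2 hab.2.1
        exact (mem_insert.1 h1).resolve_right hab.2.2
      · exact absurd hab (incG_rr _ _ _ _)) _ hz
  exact this.1 z rfl

/-- A full vertex has a hyperedge through any given core vertex that otherwise stays in a given
large part `L` of the core. -/
lemma full_edge [DecidableEq V] {r : ℕ} {K : Finset V} {y x : V} (hr : 3 ≤ r) (hy : Full H r K y)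
    {L : Finset V} (hL : L ⊆ K) (hLr : r ≤ #L + 1) (hx : x ∈ L) :
    ∃ e, Sum.inr e ∈ comp H K y ∧ e ∈ H ∧ y ∈ e ∧ x ∈ e ∧ e ⊆ insert y L := by
  obtain ⟨S, hxS, hSL, hSc⟩ := exists_subsuperset_card_eq (s := {x}) (t := L) (n := r - 1)
    (by simpa using hx) (by rw [card_singleton]; omega) (by omega)
  have hyS : y ∉ S := fun h => hy.1 (hL (hSL h))
  have h1 : insert y S ∈ H ∧ y ∈ insert y S := (hy.2 _).2 ⟨by rw [card_insert_of_notMem hyS]; omega,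
    mem_insert_self _ _, insert_subset_insert _ (hSL.trans hL)⟩
  exact ⟨_, comp_edge_of (comp_self y) hy.1 h1.1 h1.2, h1.1, h1.2,
    mem_insert_of_mem (hxS (mem_singleton_self x)), insert_subset_insert _ hSL⟩

lemma full_endP [DecidableEq V] {r : ℕ} {K : Finset V} {y x : V} (hr : 3 ≤ r) (hK : r ≤ #K)
    (hy : Full H r K y) (hx : x ∈ K) : EndP H K y x 1 := by
  obtain ⟨e, he, -, hye, hxe, -⟩ := full_edge hr hy (Subset.refl K) (by omega) hx
  exact ⟨_, (endP_one hx he hxe hy.1 hye).1, (endP_one hx he hxe hy.1 hye).2, rfl⟩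

lemma full_conn [DecidableEq V] {r : ℕ} {K : Finset V} {y x x' : V} (hr : 3 ≤ r) (hK : r ≤ #K)
    (hy : Full H r K y) (hx : x ∈ K) (hx' : x' ∈ K) (hxx : x ≠ x') : Conn H K y x x' := by
  obtain ⟨e, he, -, hye, hxe, hsub⟩ := full_edge hr hy (erase_subset x' K)
    (by rw [card_erase_of_mem hx']; omega) (mem_erase.2 ⟨hxx, hx⟩)
  obtain ⟨e', he', -, hye', hxe', -⟩ := full_edge hr hy (Subset.refl K) (by omega) hx'
  refine conn_of_edges hy.1 hx hx' hxx he he' ?_ hxe hxe'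
  rintro rfl
  rcases mem_insert.1 (hsub hxe') with h | h
  · subst h; exact hy.1 hx'
  · simp at h

/-- Once enough full vertices over a core `K` are present, every hyperedge has at most one vertex
outside the core. -/
lemma one_outside [DecidableEq V] {W K Y : Finset V} {r k ℓ₁ ℓ₂ : ℕ} (hr : 3 ≤ r)
    (hk : r + 6 ≤ k) (hcard : ∀ e ∈ H, e.card = r) (hsub : ∀ e ∈ H, e ⊆ W)
    (hS : ∀ S ⊆ W, #S ≤ k → #S * k.choose (r - 1) ≤ #(H.filter (fun e => ¬ Disjoint e S)))
    (hnc : ¬ IsBergeCopy ((pathG ℓ₁).sum (pathG ℓ₂)) H) (hℓ : ℓ₁ + ℓ₂ = 2 * k) (hℓ₂ : ℓ₂ ≤ ℓ₁)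
    (hK : #K = k) (hY : #Y = k + 1) (hfull : ∀ y ∈ Y, Full H r K y)
    {e : Finset V} (he : e ∈ H) {z z' : V} (hz : z ∈ e) (hz' : z' ∈ e) (hzK : z ∉ K)
    (hzK' : z' ∉ K) : z = z' := by
  by_contra hne
  have hec := comp_edge_of (comp_self z) hzK he hz
  have hz'c := comp_vert_of hec hzK' hz'
  have hnf : ∀ y, Full H r K y → Sum.inl y ∉ comp H K z := by
    intro y hy hyc
    have h1 : Sum.inl z ∈ comp H K y := SimpleGraph.Reachable.symm hyc
    have h2 : Sum.inl z' ∈ comp H K y := SimpleGraph.Reachable.trans h1 hz'c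
    exact hne ((full_comp hy h1).trans (full_comp hy h2).symm)
  obtain ⟨y₁, y₂, ys, hys⟩ : ∃ y₁ y₂ ys, Y.toList = y₁ :: y₂ :: ys := by
    have hl : Y.toList.length = k + 1 := by rw [length_toList, hY]
    rcases hq : Y.toList with _ | ⟨y₁, _ | ⟨y₂, ys⟩⟩
    · rw [hq] at hl; simp at hl
    · rw [hq] at hl; simp at hl; omega
    · exact ⟨y₁, y₂, ys, rfl⟩
  have hysl : ys.length + 1 = #K := by
    have : Y.toList.length = k + 1 := by rw [length_toList, hY]
    rw [hys] at this
    simp at this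
    omega
  have hmem : ∀ a ∈ y₁ :: y₂ :: ys, a ∈ Y := fun a ha => by rw [← hys, mem_toList] at ha; exact ha
  have hnd : (y₁ :: y₂ :: ys).Nodup := hys ▸ nodup_toList Y
  have hpw : (y₁ :: y₂ :: ys).Pairwise (fun a b => Sum.inl b ∉ comp H K a) :=
    hnd.pairwise_of_forall_ne fun a ha b _ hab hb => hab (full_comp (hfull a (hmem a ha)) hb).symm
  have hconn : ∀ a ∈ ys, ∀ y ∈ K, ∀ y' ∈ K, y ≠ y' → Conn H K a y y' := fun a ha y hy y' hy' hyy =>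
    full_conn hr (by omega) (hfull a (hmem a (by simp [ha]))) hy hy' hyy
  have hend : ∀ a ∈ Y, ∀ y ∈ K, EndP H K a y 1 := fun a ha y hy =>
    full_endP hr (by omega) (hfull a ha) hy
  have hzW : z ∈ W := hsub e he hz
  by_cases hatt : ∃ f, Sum.inr f ∈ comp H K z ∧ ∃ x ∈ K, x ∈ f
  -- if the component of `z` is attached to `K`, a path into it extends the one through `K`; if not,
  -- it contains a path with `k ≥ ℓ₂` hyperedges disjoint from one with `2k ≥ ℓ₁` through `K`
  · obtain ⟨N, hNK, ⟨x, hx⟩, -, -, hN⟩ := local_struct hr hk hcard hsub hS hzK hatt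
    have hNk := card_le_card hNK
    rcases hN x hx with ⟨h, h1, h2, h3⟩ | ⟨h1, y, hy, hyF⟩
    · obtain ⟨p, hp1, hp2, hp3, -⟩ := assembly (H := H) (A := K) (N := K) (x := x) (c := z) (d := y₁)
        (cs := ys) (h := h) (h₀ := 1) (Subset.refl K) (hNK hx) hysl (by
          intro a ha
          rcases List.mem_cons.1 ha with rfl | ha
          · exact hzK
          · exact (hfull a (hmem a (by
              rcases List.mem_cons.1 ha with rfl | ha <;> simp [*]))).1) (by
          rw [List.pairwise_cons]
          refine ⟨fun a ha => hnf a (hfull a (hmem a (by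
              rcases List.mem_cons.1 ha with rfl | ha <;> simp [*]))), ?_⟩
          exact hpw.sublist (List.Sublist.cons_cons _ (List.sublist_cons_self _ _))) h3
        (fun y hy => ⟨1, le_rfl, hend y₁ (hmem y₁ (by simp)) y hy⟩) hconn
      exact hnc (union_copy_of_path hp1 hp2 (by omega))
    · rw [eq_of_subset_of_card_le hNK (by omega)] at hyF
      exact hnf y hyF hy
  · push Not at hatt
    obtain ⟨l, hl1, hl2, hl3⟩ := long_path_of_unattached hr hk hcard hsub hS hzW hzK
      (fun f hf x hxf hxK => hatt f hf x hxK hxf)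
    obtain ⟨x, hx⟩ := card_pos.1 (show 0 < #K by omega)
    obtain ⟨p, hp1, hp2, hp3, hp4⟩ := assembly (H := H) (A := K) (N := K) (x := x) (c := y₁) (d := y₂)
      (cs := ys) (h := 1) (h₀ := 1) (Subset.refl K) hx hysl
      (fun a ha => (hfull a (hmem a ha)).1) hpw (hend y₁ (hmem y₁ (by simp)) x hx)
      (fun y hy => ⟨1, le_rfl, hend y₂ (hmem y₂ (by simp)) y hy⟩) hconn
    refine hnc (union_copy_of_paths hp1 hl1 hp2 ⟨z, rfl⟩ (by omega) (by simp; omega) ?_)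
    intro q hq hql
    have hqz := hl2 q hql
    rcases hp4 q hq with ⟨y, hy, rfl⟩ | ⟨a, ha, h⟩
    · exact comp_notMem hzK hqz hy
    · exact comp_disj (hnf a (hfull a (hmem a ha))) hqz h

/-- The number of `r`-sets in `W` having at most one vertex outside a `k`-set. -/
lemma count_one_outside [DecidableEq V] {W K : Finset V} {r k : ℕ}
    (hcard : ∀ e ∈ H, e.card = r) (hsub : ∀ e ∈ H, e ⊆ W) (hKW : K ⊆ W) (hK : #K = k)
    (h1 : ∀ e ∈ H, ∀ z ∈ e, ∀ z' ∈ e, z ∉ K → z' ∉ K → z = z') :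
    #H ≤ k.choose (r - 1) * (#W - k) + k.choose r := by
  have hs : H ⊆ powersetCard r K ∪
      (powersetCard (r - 1) K ×ˢ (W \ K)).image (fun q => insert q.2 q.1) := by
    intro e he
    by_cases heK : e ⊆ K
    · exact mem_union_left _ (mem_powersetCard.2 ⟨heK, hcard e he⟩)
    obtain ⟨z, hz, hzK⟩ := not_subset.1 heK
    refine mem_union_right _ (mem_image.2 ⟨(e.erase z, z), mem_product.2
      ⟨mem_powersetCard.2 ⟨?_, ?_⟩, mem_sdiff.2 ⟨hsub e he hz, hzK⟩⟩, insert_erase hz⟩)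
    · intro w hw
      obtain ⟨h2, h3⟩ := mem_erase.1 hw
      by_contra hwK
      exact h2 (h1 e he w h3 z hz hwK hzK)
    · rw [card_erase_of_mem hz, hcard e he]
  calc #H ≤ _ := card_le_card hs
    _ ≤ _ := card_union_le _ _
    _ ≤ k.choose r + k.choose (r - 1) * (#W - k) := by
      refine Nat.add_le_add (by rw [card_powersetCard, hK]) (card_image_le.trans ?_)
      rw [card_product, card_powersetCard, card_sdiff_of_subset hKW, hK]
    _ = _ := add_comm _ _

/-- The upper bound for a hypergraph `H` in which every small vertex set meets many hyperedges. The
union is excluded in a larger hypergraph `H'`, which also provides the path with `ℓ₁` edges. -/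
lemma upper_core [DecidableEq V] {H' : Finset (Finset V)} {W : Finset V} {r k ℓ₁ ℓ₂ F : ℕ}
    (hr : 3 ≤ r) (hk : r + 6 ≤ k) (hcard : ∀ e ∈ H, e.card = r) (hsub : ∀ e ∈ H, e ⊆ W)
    (hS : ∀ S ⊆ W, #S ≤ k → #S * k.choose (r - 1) ≤ #(H.filter (fun e => ¬ Disjoint e S)))
    (hHH' : H ⊆ H') (hnc : ¬ IsBergeCopy ((pathG ℓ₁).sum (pathG ℓ₂)) H')
    (hℓ : ℓ₁ + ℓ₂ = 2 * k) (hℓ₂ : ℓ₂ ≤ ℓ₁) (hcopy : IsBergeCopy (pathG ℓ₁) H')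
    (hF : F = 2 ^ (ℓ₁ + 1 + r * (2 * k + 1)) * (k + 3))
    (hW : ℓ₁ + 1 + F * growth F r (2 * k + 1) < #W) :
    #H ≤ k.choose (r - 1) * (#W - k) + k.choose r := by
  obtain ⟨u, g, hu, hg, hinc⟩ := copy_bseq hcopy
  set A₀ := (range (ℓ₁ + 1)).image u with hA₀
  have hA₀c : #A₀ ≤ ℓ₁ + 1 := card_image_le.trans (by simp)
  have hmono : ∀ {α : Type} (G : SimpleGraph α), IsBergeCopy G H → IsBergeCopy G H' := by
    rintro α G ⟨f, φ, h1, h2, h3⟩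
    exact ⟨f, φ, h1, h2, fun e he => ⟨hHH' (h3 e he).1, (h3 e he).2⟩⟩
  have hnc' : ¬ IsBergeCopy ((pathG ℓ₁).sum (pathG ℓ₂)) H := fun h => hnc (hmono _ h)
  have hno : ∀ p : List (V ⊕ Finset V), BPath H p → (∃ x, p[0]? = some (Sum.inl x)) →
      p.length < 4 * k + 3 := by
    intro p hp hp0
    by_contra hlt
    exact hnc' (union_copy_of_path hp hp0 (by omega))
  have hatt : ∀ A, A₀ ⊆ A → ∀ v ∈ W, v ∉ A → ∃ e, Sum.inr e ∈ comp H A v ∧ ∃ x ∈ A, x ∈ e := by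
    intro A hA v hv hvA
    by_contra hcon
    push Not at hcon
    obtain ⟨l, hl1, hl2, hl3⟩ := long_path_of_unattached hr hk hcard hsub hS hv hvA
      (fun f hf x hxf hxK => hcon f hf x hxK hxf)
    obtain ⟨u', g', hu', hg', h1, h2, h3⟩ := hl1.seqs ⟨v, rfl⟩ ℓ₂ (by simp; omega)
    refine hnc (bseq_union_copy ⟨hu, hg, hinc⟩ ⟨h1, h2, fun i hi =>
      ⟨hHH' (h3 i hi).1, (h3 i hi).2⟩⟩ ?_ ?_)
    · intro i hi j hj hij
      have := hl2 _ (List.mem_of_getElem? (hu' j hj))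
      exact comp_notMem hvA this (hA (mem_image.2 ⟨i, mem_range.2 (by omega), hij⟩))
    · intro i hi j hj hij
      have := hl2 _ (List.mem_of_getElem? (hg' j hj))
      exact hcon _ this (u i) (hA (mem_image.2 ⟨i, mem_range.2 (by omega), rfl⟩))
        (hij ▸ (hinc i hi).2.1)
  obtain ⟨A, hA₀A, hAc, hAF⟩ := many_classes (F := F) (J := 2 * k + 1) hcard
    (hatt A₀ (Subset.refl _)) (fun p hp hp0 => by have := hno p hp hp0; omega) (by omega)
  obtain ⟨K, Y, hK, hY, hfull⟩ := exists_full_set (M := ℓ₁ + 1 + r * (2 * k + 1)) hr hk hcard hsub hS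
    hno (hatt A hA₀A) (by omega) (by rw [← hF]; exact hAF)
  obtain ⟨y, hy⟩ := card_pos.1 (show 0 < #Y by omega)
  refine count_one_outside hcard hsub ?_ hK ?_
  · intro x hx
    obtain ⟨e, -, he, -, hxe, -⟩ := full_edge hr (hfull y hy) (Subset.refl K) (by omega) hx
    exact hsub e he hxe
  · intro e he z hz z' hz' hzK hzK'
    exact one_outside hr hk hcard hsub hS hnc' hℓ hℓ₂ hK hY hfull he hz hz' hzK hzK'

end

/-! ### Dense subsets, the extremal hypergraph, and the theorem -/

/-- Passing to a dense part. Choose `W` maximising `(k + 1) e(W) - ((k + 1) c - 1) |W|` where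
`c = C(k, r - 1)`. Deleting a set `S` with `|S| ≤ k` does not increase this quantity, so `S` meets
more than `c |S| - 1` hyperedges; comparison with the whole vertex set keeps the edge bound and
forces `W` to be large. -/
lemma exists_dense_subset {V : Type*} [DecidableEq V] [Fintype V] {n r k w₀ : ℕ}
    (H : Finset (Finset V)) (hn : Fintype.card V = n) (hkw : k ≤ w₀)
    (hc0 : 0 < k.choose (r - 1)) (hbig : (k + 1) * (2 ^ w₀ + k.choose (r - 1) * k) < n)
    (hH : k.choose (r - 1) * (n - k) + k.choose r < #H) :
    ∃ W : Finset V, w₀ < #W ∧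
      (∀ S ⊆ W, #S ≤ k → #S * k.choose (r - 1) ≤
        #((H.filter (fun e => e ⊆ W)).filter (fun e => ¬ Disjoint e S))) ∧
      k.choose (r - 1) * (#W - k) + k.choose r < #(H.filter (fun e => e ⊆ W)) := by
  set c := k.choose (r - 1) with hc
  set b := k.choose r with hb
  obtain ⟨W, -, hW⟩ := exists_max_image (univ : Finset (Finset V))
    (fun W => ((k : ℤ) + 1) * #(H.filter (fun e => e ⊆ W)) - ((k + 1) * c - 1) * #W) ⟨∅, mem_univ _⟩
  have hkn : k ≤ n := by
    have h1 : w₀ < 2 ^ w₀ := Nat.lt_two_pow_self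
    have h2 : 1 * (2 ^ w₀ + c * k) ≤ (k + 1) * (2 ^ w₀ + c * k) :=
      Nat.mul_le_mul_right _ (by omega)
    have h3 := Nat.zero_le (c * k)
    omega
  have hun := hW univ (mem_univ _)
  simp only [subset_univ, filter_true, card_univ, hn] at hun
  have hHz : (c : ℤ) * (n - k) + b + 1 ≤ #H := by
    have : ((c * (n - k) + b + 1 : ℕ) : ℤ) ≤ #H := by exact_mod_cast hH
    push_cast [Nat.cast_sub hkn] at this
    exact this
  have hWn : #W ≤ n := hn ▸ card_le_univ W
  set E := #(H.filter (fun e => e ⊆ W)) with hE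
  have hkz : (0 : ℤ) < k + 1 := by positivity
  have hmul := mul_le_mul_of_nonneg_left hHz hkz.le
  have hW0 : w₀ < #W := by
    by_contra hlt
    have h1 : E ≤ 2 ^ w₀ := by
      calc E ≤ #W.powerset := card_le_card fun e he => mem_powerset.2 (mem_filter.1 he).2
        _ = 2 ^ #W := card_powerset _
        _ ≤ 2 ^ w₀ := Nat.pow_le_pow_right (by omega) (by omega)
    have h1z : (E : ℤ) ≤ (2 : ℤ) ^ w₀ := by exact_mod_cast h1
    have h2 := mul_le_mul_of_nonneg_left h1z hkz.le
    have hbz : ((k : ℤ) + 1) * (2 ^ w₀ + c * k) < n := by exact_mod_cast hbig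
    have h3 : (0 : ℤ) ≤ ((k + 1) * c - 1) * #W := by
      have h : (1 : ℤ) ≤ c := by exact_mod_cast hc0
      have h4 : (0 : ℤ) ≤ (k + 1) * c - 1 := by nlinarith
      positivity
    have hb0 : (0 : ℤ) ≤ (k + 1) * b := by positivity
    nlinarith
  refine ⟨W, hW0, ?_, ?_⟩
  · intro S hSW hSk
    have h1 := hW (W \ S) (mem_univ _)
    have h2 : H.filter (fun e => e ⊆ W \ S) =
        (H.filter (fun e => e ⊆ W)).filter (fun e => Disjoint e S) := by
      ext e
      simp only [mem_filter, subset_sdiff, and_assoc]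
    have h3 := card_filter_add_card_filter_not (s := H.filter (fun e => e ⊆ W))
      (fun e => Disjoint e S)
    rw [h2] at h1
    have h4 : (#(W \ S) : ℤ) = #W - #S := by
      rw [card_sdiff_of_subset hSW, Nat.cast_sub (card_le_card hSW)]
    set t := #((H.filter (fun e => e ⊆ W)).filter (fun e => ¬ Disjoint e S)) with ht
    set t' := #((H.filter (fun e => e ⊆ W)).filter (fun e => Disjoint e S)) with ht'
    rw [h4] at h1
    rw [← hE] at h3
    have h3z : (t' : ℤ) + t = E := by exact_mod_cast h3
    have h8 : ((k : ℤ) + 1) * E = (k + 1) * t' + (k + 1) * t := by rw [← h3z]; ring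
    by_contra hlt
    have h5 : (t : ℤ) + 1 ≤ #S * c := by exact_mod_cast (not_le.1 hlt)
    have h6 := mul_le_mul_of_nonneg_left h5 hkz.le
    have h7 : (#S : ℤ) ≤ k := by exact_mod_cast hSk
    nlinarith
  · have h1 : (c : ℤ) * (#W - k) + b < E := by
      by_contra hlt
      have h2 := mul_le_mul_of_nonneg_left (not_lt.1 hlt) hkz.le
      have h3 : (#W : ℤ) ≤ n := by exact_mod_cast hWn
      nlinarith
    have : ((c * (#W - k) + b : ℕ) : ℤ) < E := by
      push_cast [Nat.cast_sub (hkw.trans hW0.le)]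
      exact h1
    exact_mod_cast this

/-- Two odd paths with `k + 1` perfect matching edges in total do not embed if every hyperedge has at
most one vertex outside a `k`-set. -/
lemma union_free_of_one_outside {V : Type*} [DecidableEq V] {H : Finset (Finset V)} {K : Finset V}
    {a b k : ℕ} (hK : #K = k) (hab : a + b + 1 = k)
    (h1 : ∀ e ∈ H, ∀ z ∈ e, ∀ z' ∈ e, z ∉ K → z' ∉ K → z = z') :
    ¬ IsBergeCopy ((pathG (2 * a + 1)).sum (pathG (2 * b + 1))) H := by
  rintro ⟨f, φ, hf, -, hH⟩
  -- the edges of the perfect matching, indexed by path and position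
  let v : Fin (a + 1) ⊕ Fin (b + 1) → Bool → Fin (2 * a + 1 + 1) ⊕ Fin (2 * b + 1 + 1)
    | Sum.inl i, t => Sum.inl ⟨2 * i + t.toNat, by have := t.toNat_le; omega⟩
    | Sum.inr i, t => Sum.inr ⟨2 * i + t.toNat, by have := t.toNat_le; omega⟩
  have hv : ∀ s s' t t', v s t = v s' t' → s = s' := by
    rintro (i | i) (j | j) t t' h
    · have h2 := congrArg Fin.val (Sum.inl.inj h)
      have := t.toNat_le; have := t'.toNat_le
      simp only at h2
      congr 1; ext; omega
    · cases h
    · cases h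
    · have h2 := congrArg Fin.val (Sum.inr.inj h)
      have := t.toNat_le; have := t'.toNat_le
      simp only at h2
      congr 1; ext; omega
  have hadj : ∀ s, ((pathG (2 * a + 1)).sum (pathG (2 * b + 1))).Adj (v s false) (v s true) := by
    rintro (i | i)
    · rw [SimpleGraph.sum_adj_inl, pathG_adj]; left; simp
    · rw [SimpleGraph.sum_adj_inr, pathG_adj]; left; simp
  have hex : ∀ s, ∃ t, f (v s t) ∈ K := by
    intro s
    by_contra hcon
    push Not at hcon
    obtain ⟨he, hx⟩ := hH _ (show s(v s false, v s true) ∈ SimpleGraph.edgeSet _ from hadj s)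
    have := h1 _ he _ (hx _ (Sym2.mem_mk_left _ _)) _ (hx _ (Sym2.mem_mk_right _ _)) (hcon _) (hcon _)
    exact (hadj s).ne (hf this)
  choose t ht using hex
  have hc := card_le_card_of_injOn (s := univ) (t := K) (fun s => f (v s (t s))) (fun s _ => ht s)
    (fun s _ s' _ h => hv _ _ _ _ (hf h))
  simp only [card_univ, Fintype.card_sum, Fintype.card_fin] at hc
  omega

/-- All `r`-sets with at most one vertex outside a `k`-set form an extremal example. -/
lemma exists_extremal {n r a b k : ℕ} (hr : 1 ≤ r) (hab : a + b + 1 = k) (hkn : k ≤ n) :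
    ∃ H : Finset (Finset (Fin n)), (∀ e ∈ H, e.card = r) ∧
      ¬ IsBergeCopy ((pathG (2 * a + 1)).sum (pathG (2 * b + 1))) H ∧
      #H = k.choose (r - 1) * (n - k) + k.choose r := by
  obtain ⟨K, -, hK⟩ := exists_subset_card_eq (s := (univ : Finset (Fin n))) (n := k) (by simpa using hkn)
  refine ⟨powersetCard r K ∪ (powersetCard (r - 1) K ×ˢ (univ \ K)).image (fun q => insert q.2 q.1),
    ?_, union_free_of_one_outside hK hab ?_, ?_⟩
  · intro e he
    rcases mem_union.1 he with h | h
    · exact (mem_powersetCard.1 h).2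
    · obtain ⟨⟨T, z⟩, hq, rfl⟩ := mem_image.1 h
      obtain ⟨h1, h2⟩ := mem_product.1 hq
      obtain ⟨h3, h4⟩ := mem_powersetCard.1 h1
      simp only at h3 h4 h2 ⊢
      rw [card_insert_of_notMem (fun h => (mem_sdiff.1 h2).2 (h3 h))]
      omega
  · intro e he z hz z' hz' hzK hzK'
    rcases mem_union.1 he with h | h
    · exact absurd ((mem_powersetCard.1 h).1 hz) hzK
    · obtain ⟨⟨T, w⟩, hq, rfl⟩ := mem_image.1 h
      have h3 := (mem_powersetCard.1 (mem_product.1 hq).1).1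
      simp only at h3 hz hz'
      exact ((mem_insert.1 hz).resolve_right fun h => hzK (h3 h)).trans
        ((mem_insert.1 hz').resolve_right fun h => hzK' (h3 h)).symm
  · rw [card_union_of_disjoint, card_image_of_injOn, card_product, card_powersetCard,
      card_powersetCard, card_sdiff_of_subset (subset_univ K), hK, card_univ, Fintype.card_fin, add_comm]
    · rintro ⟨T, z⟩ hq ⟨T', z'⟩ hq' h
      rw [mem_coe, mem_product] at hq hq'
      have h1 := (mem_powersetCard.1 hq.1).1
      have h1' := (mem_powersetCard.1 hq'.1).1
      have h2 := (mem_sdiff.1 hq.2).2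
      have h2' := (mem_sdiff.1 hq'.2).2
      simp only at h h1 h1' h2 h2'
      have h3 : z = z' := by
        have : z ∈ insert z' T' := h ▸ mem_insert_self z T
        exact (mem_insert.1 this).resolve_right fun h => h2 (h1' h)
      subst h3
      rw [← erase_insert (fun h => h2 (h1 h)), h, erase_insert (fun h => h2 (h1' h))]
    · rw [disjoint_left]
      intro e he he'
      obtain ⟨⟨T, z⟩, hq, rfl⟩ := mem_image.1 he'
      exact (mem_sdiff.1 (mem_product.1 hq).2).2
        ((mem_powersetCard.1 he).1 (mem_insert_self _ _))

/-- The supremum defining `exBerge` is over a bounded set, so it is not a junk value. -/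
lemma exBerge_bdd {α : Type*} (r n : ℕ) (F : SimpleGraph α) :
    BddAbove {m | ∃ H : Finset (Finset (Fin n)),
      (∀ e ∈ H, e.card = r) ∧ ¬ IsBergeCopy F H ∧ H.card = m} := by
  refine ⟨#(univ : Finset (Finset (Fin n))), ?_⟩
  rintro m ⟨H, -, -, rfl⟩
  exact card_le_univ H

/-- A Berge copy of the union contains a Berge copy of the first path. -/
lemma path_of_union {V : Type*} {H : Finset (Finset V)} {m n : ℕ}
    (h : IsBergeCopy ((pathG m).sum (pathG n)) H) : IsBergeCopy (pathG m) H := by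
  obtain ⟨f, φ, hf, hφ, hH⟩ := h
  have hmap : ∀ e ∈ (pathG m).edgeSet, e.map Sum.inl ∈ ((pathG m).sum (pathG n)).edgeSet := by
    intro e
    induction e with
    | _ x y => intro h; exact h
  refine ⟨fun i => f (Sum.inl i), fun e => φ (e.map Sum.inl), fun i j hij => Sum.inl.inj (hf hij),
    ?_, ?_⟩
  · intro e he e' he' hee
    exact Sym2.map.injective Sum.inl_injective (hφ (hmap e he) (hmap e' he') hee)
  · intro e he
    exact ⟨(hH _ (hmap e he)).1, fun x hx =>
      (hH _ (hmap e he)).2 _ (Sym2.mem_map.2 ⟨x, hx, rfl⟩)⟩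

theorem ex_berge_two_paths (r ℓ₁ ℓ₂ : ℕ) (hr : 3 ≤ r)
    (hodd1 : Odd ℓ₁) (hodd2 : Odd ℓ₂) (h21 : ℓ₂ ≤ ℓ₁) (h2 : r + 6 ≤ ℓ₂) :
    ∃ N, ∀ n ≥ N,
      exBerge r n ((pathG ℓ₁).sum (pathG ℓ₂)) =
        max (exBerge r n (pathG ℓ₁))
          (((ℓ₁ + ℓ₂) / 2).choose (r - 1) * (n - (ℓ₁ + ℓ₂) / 2)
            + ((ℓ₁ + ℓ₂) / 2).choose r) := by
  obtain ⟨a, rfl⟩ := hodd1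
  obtain ⟨b, rfl⟩ := hodd2
  obtain ⟨k, hk⟩ : ∃ k, k = a + b + 1 := ⟨_, rfl⟩
  have hdiv : (2 * a + 1 + (2 * b + 1)) / 2 = k := by omega
  rw [hdiv]
  obtain ⟨F, hF⟩ : ∃ F, F = 2 ^ (2 * a + 1 + 1 + r * (2 * k + 1)) * (k + 3) := ⟨_, rfl⟩
  obtain ⟨w₀, hw₀⟩ : ∃ w₀, w₀ = k + (2 * a + 1 + 1 + F * growth F r (2 * k + 1)) := ⟨_, rfl⟩
  refine ⟨k + (k + 1) * (2 ^ w₀ + k.choose (r - 1) * k) + 1, fun n hn => le_antisymm ?_ (max_le ?_ ?_)⟩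
  · refine csSup_le' ?_
    rintro m ⟨H, hcard, hfree, rfl⟩
    by_cases hcopy : IsBergeCopy (pathG (2 * a + 1)) H
    · refine le_max_of_le_right ?_
      by_contra hlt
      obtain ⟨W, hW, hS, hWe⟩ := exists_dense_subset (r := r) (k := k) (w₀ := w₀) (n := n) H (by simp)
        (by omega) (Nat.choose_pos (by omega)) (by omega) (not_le.1 hlt)
      exact absurd (upper_core (F := F) hr (by omega)
        (fun e he => hcard e (mem_filter.1 he).1) (fun e he => (mem_filter.1 he).2) hS
        (filter_subset _ _) hfree (by omega) h21 hcopy hF (by omega)) (not_le.2 hWe)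
    · exact le_max_of_le_left (le_csSup (exBerge_bdd _ _ _) ⟨H, hcard, hcopy, rfl⟩)
  · refine csSup_le' ?_
    rintro m ⟨H, hcard, hfree, rfl⟩
    exact le_csSup (exBerge_bdd _ _ _) ⟨H, hcard, fun h => hfree (path_of_union h), rfl⟩
  · exact le_csSup (exBerge_bdd _ _ _) (exists_extremal (by omega) (by omega) (by omega))
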